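/- arXiv:1209.3385 — 2 statements merged into one kernel-verified Lean document; each statement's English description precedes it below -/
import Mathlib

section
/- Fix α>0, 0<θ≤1 and 0<κ<θ/8, and let g(x)=∑_{j=3}^{q}c_j x^j be a polynomial with real coefficients whose lowest-order term has degree at least 3. Then ⟨exp{−∑_{j=−n}^{n}g(x_j/W)}⟩₀ → 1 as n→∞, where ⟨·⟩₀ is taken with the real parameter γ=α. -/
open MeasureTheory

/-- Extend `x : Fin m → ℝ` to `ℕ → ℝ` by zero. -/
noncomputable def pad (m : ℕ) (x : Fin m → ℝ) : ℕ → ℝ :=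
  fun j => if h : j < m then x ⟨j, h⟩ else 0

/-- The real weight `μ_α` on `ℝ^m`. -/
noncomputable def muR (m : ℕ) (W α : ℝ) (x : Fin m → ℝ) : ℝ :=
  Real.exp (-(1/2) * ∑ j ∈ Finset.Ico 1 m, (pad m x j - pad m x (j-1))^2
    - (α / W^2) * ∑ j ∈ Finset.range m, (pad m x j)^2)

/-- `W(n) = N^{(1+θ)/2}` where `N = 2n+1`, so `W² = N^{1+θ}`. -/
noncomputable def Wn (θ : ℝ) (n : ℕ) : ℝ := ((2 * (n : ℝ) + 1)) ^ ((1 + θ) / 2)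

/-- `δ(n) = W(n)^{−κ}`. -/
noncomputable def dl (θ κ : ℝ) (n : ℕ) : ℝ := (Wn θ n) ^ (-κ)

/-- The cube `{x : |x_i| ≤ r for all i}`. -/
def box (m : ℕ) (r : ℝ) : Set (Fin m → ℝ) := {x | ∀ i, |x i| ≤ r}

open scoped ENNReal


lemma bm1 (A B C : Set ℝ) (hA : MeasurableSet A) (hB : MeasurableSet B)
    (hA0 : A.Nonempty) (hB0 : B.Nonempty)
    (h : ∀ a ∈ A, ∀ b ∈ B, (a + b) / 2 ∈ C) : volume A + volume B ≤ 2 * volume C := by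
  have key : ∀ K L : Set ℝ, IsCompact K → IsCompact L → K.Nonempty → L.Nonempty →
      K ⊆ A → L ⊆ B → volume K + volume L ≤ 2 * volume C := by
    intro K L hK hL hK0 hL0 hKA hLB
    obtain ⟨k, hk, hkm⟩ := hK.exists_isGreatest hK0
    obtain ⟨l, hl, hlm⟩ := hL.exists_isLeast hL0
    set S : Set ℝ := (fun x => x + (-l)) ⁻¹' K with hS
    set T : Set ℝ := (fun x => x + (-k)) ⁻¹' L with hT
    have hvS : volume S = volume K := measure_preimage_add_right _ _ _
    have hvT : volume T = volume L := measure_preimage_add_right _ _ _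
    have hTm : MeasurableSet T := (measurable_add_const (-k)) hL.measurableSet
    have hinter : volume (S ∩ T) = 0 := by
      refine measure_mono_null (t := {k + l}) ?_ (by simp)
      rintro x ⟨h1, h2⟩
      have h3 := hkm h1
      have h4 := hlm h2
      simp only [Set.mem_singleton_iff]
      linarith
    have hun : S ∪ T ⊆ (fun x => (1/2 : ℝ) * x) ⁻¹' C := by
      rintro x (h1 | h1)
      · have := h _ (hKA h1) _ (hLB hl)
        simp only [Set.mem_preimage]
        convert this using 1
        ring
      · have := h _ (hKA hk) _ (hLB h1)
        simp only [Set.mem_preimage]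
        convert this using 1
        ring
    have h5 := measure_union_add_inter (μ := volume) S hTm
    rw [hinter, add_zero, hvS, hvT] at h5
    rw [← h5]
    refine (measure_mono hun).trans ?_
    rw [Real.volume_preimage_mul_left (by norm_num)]
    norm_num
  obtain ⟨a0, ha0⟩ := hA0
  obtain ⟨b0, hb0⟩ := hB0
  rw [hA.measure_eq_iSup_isCompact, hB.measure_eq_iSup_isCompact]
  simp only [iSup_and']
  refine ENNReal.biSup_add_biSup_le' ⟨∅, by simp⟩ ⟨∅, by simp⟩ ?_
  rintro K ⟨hKA, hK⟩ L ⟨hLB, hL⟩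
  refine le_trans (add_le_add (measure_mono (Set.subset_insert a0 K))
    (measure_mono (Set.subset_insert b0 L))) ?_
  exact key _ _ (hK.insert _) (hL.insert _) (Set.insert_nonempty _ _) (Set.insert_nonempty _ _)
    (Set.insert_subset ha0 hKA) (Set.insert_subset hb0 hLB)

lemma pl_norm (f g h : ℝ → ℝ) (hf : Measurable f) (hg : Measurable g) (hh : Measurable h)
    (f0 : ∀ x, 0 ≤ f x) (g0 : ∀ x, 0 ≤ g x) (h0 : ∀ x, 0 ≤ h x)
    (f1 : ∀ x, f x ≤ 1) (g1 : ∀ x, g x ≤ 1)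
    (fs : ∀ t < 1, ∃ x, t < f x) (gs : ∀ t < 1, ∃ x, t < g x)
    (H : ∀ x y, f x * g y ≤ h ((x + y) / 2) ^ 2) :
    (∫⁻ x, ENNReal.ofReal (f x)) + (∫⁻ x, ENNReal.ofReal (g x))
      ≤ 2 * ∫⁻ x, ENNReal.ofReal (h x) := by
  rw [lintegral_eq_lintegral_meas_lt volume (Filter.Eventually.of_forall f0) hf.aemeasurable,
    lintegral_eq_lintegral_meas_lt volume (Filter.Eventually.of_forall g0) hg.aemeasurable,
    lintegral_eq_lintegral_meas_lt volume (Filter.Eventually.of_forall h0) hh.aemeasurable]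
  have hm : ∀ u : ℝ → ℝ, Measurable (fun t : ℝ => volume {a | t < u a}) := by
    intro u
    apply Antitone.measurable
    intro s t hst
    exact measure_mono (fun a ha => lt_of_le_of_lt hst ha)
  rw [← lintegral_add_left (hm f), ← lintegral_const_mul _ (hm h)]
  refine setLIntegral_mono (measurable_const.mul (hm h)) ?_
  intro t ht
  have ht0 : 0 < t := ht
  by_cases ht1 : t < 1
  · refine bm1 _ _ _ (measurableSet_lt measurable_const hf) (measurableSet_lt measurable_const hg)
      (fs t ht1) (gs t ht1) ?_
    intro a ha b hb
    have ha' : t < f a := ha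
    have hb' : t < g b := hb
    have := H a b
    show t < h ((a + b) / 2)
    have h3 := h0 ((a + b) / 2)
    by_contra hcon
    push Not at hcon
    nlinarith
  · have e1 : {a | t < f a} = ∅ := by
      ext a; simp only [Set.mem_ofPred_eq, Set.mem_empty_iff_false, iff_false, not_lt]
      exact (f1 a).trans (not_lt.mp ht1)
    have e2 : {a | t < g a} = ∅ := by
      ext a; simp only [Set.mem_ofPred_eq, Set.mem_empty_iff_false, iff_false, not_lt]
      exact (g1 a).trans (not_lt.mp ht1)
    simp [e1, e2]

lemma ennreal_four_mul (x y : ℝ≥0∞) : 4 * (x * y) ≤ (x + y) ^ 2 := by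
  by_cases hx : x = ⊤
  · simp [hx]
  by_cases hy : y = ⊤
  · simp [hy]
  lift x to NNReal using hx
  lift y to NNReal using hy
  have := four_mul_le_sq_add x y
  rw [mul_assoc] at this
  exact_mod_cast this

lemma pl_bdd (f g h : ℝ → ℝ) (hf : Measurable f) (hg : Measurable g) (hh : Measurable h)
    (f0 : ∀ x, 0 ≤ f x) (g0 : ∀ x, 0 ≤ g x) (h0 : ∀ x, 0 ≤ h x) (M : ℝ)
    (f1 : ∀ x, f x ≤ M) (g1 : ∀ x, g x ≤ M)
    (H : ∀ x y, f x * g y ≤ h ((x + y) / 2) ^ 2) :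
    (∫⁻ x, ENNReal.ofReal (f x)) * (∫⁻ x, ENNReal.ofReal (g x))
      ≤ (∫⁻ x, ENNReal.ofReal (h x)) ^ 2 := by
  have bf : BddAbove (Set.range f) := ⟨M, by rintro _ ⟨x, rfl⟩; exact f1 x⟩
  have bg : BddAbove (Set.range g) := ⟨M, by rintro _ ⟨x, rfl⟩; exact g1 x⟩
  set a := ⨆ x, f x with ha
  set b := ⨆ x, g x with hb
  have fa : ∀ x, f x ≤ a := fun x => le_ciSup bf x
  have gb : ∀ x, g x ≤ b := fun x => le_ciSup bg x
  rcases (le_trans (f0 0) (fa 0)).eq_or_lt with ha0 | ha0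
  · have : ∀ x, f x = 0 := fun x => le_antisymm (ha0 ▸ fa x) (f0 x)
    simp [this]
  rcases (le_trans (g0 0) (gb 0)).eq_or_lt with hb0 | hb0
  · have : ∀ x, g x = 0 := fun x => le_antisymm (hb0 ▸ gb x) (g0 x)
    simp [this]
  have hs : 0 < Real.sqrt (a * b) := Real.sqrt_pos.mpr (mul_pos ha0 hb0)
  have hs2 : Real.sqrt (a * b) ^ 2 = a * b := Real.sq_sqrt (mul_pos ha0 hb0).le
  set s := Real.sqrt (a * b)
  have := pl_norm (fun x => a⁻¹ * f x) (fun x => b⁻¹ * g x) (fun x => s⁻¹ * h x)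
    (hf.const_mul _) (hg.const_mul _) (hh.const_mul _)
    (fun x => mul_nonneg (inv_nonneg.mpr ha0.le) (f0 x))
    (fun x => mul_nonneg (inv_nonneg.mpr hb0.le) (g0 x))
    (fun x => mul_nonneg (inv_nonneg.mpr hs.le) (h0 x))
    (fun x => by rw [inv_mul_le_iff₀ ha0, mul_one]; exact fa x)
    (fun x => by rw [inv_mul_le_iff₀ hb0, mul_one]; exact gb x)
    (fun t ht => by
      have : a * t < ⨆ x, f x := by rw [← ha]; nlinarith
      obtain ⟨x, hx⟩ := exists_lt_of_lt_ciSup this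
      exact ⟨x, by rw [lt_inv_mul_iff₀ ha0]; exact hx⟩)
    (fun t ht => by
      have : b * t < ⨆ x, g x := by rw [← hb]; nlinarith
      obtain ⟨x, hx⟩ := exists_lt_of_lt_ciSup this
      exact ⟨x, by rw [lt_inv_mul_iff₀ hb0]; exact hx⟩)
    (fun x y => by
      rw [mul_pow, inv_pow, hs2]
      have h1 := H x y
      have h2 : 0 ≤ (a * b)⁻¹ := inv_nonneg.mpr (mul_pos ha0 hb0).le
      calc a⁻¹ * f x * (b⁻¹ * g y) = (a * b)⁻¹ * (f x * g y) := by rw [mul_inv]; ring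
        _ ≤ _ := mul_le_mul_of_nonneg_left h1 h2)
  simp only [ENNReal.ofReal_mul (inv_nonneg.mpr ha0.le), ENNReal.ofReal_mul (inv_nonneg.mpr hb0.le),
    ENNReal.ofReal_mul (inv_nonneg.mpr hs.le)] at this
  rw [lintegral_const_mul _ hf.ennreal_ofReal, lintegral_const_mul _ hg.ennreal_ofReal,
    lintegral_const_mul _ hh.ennreal_ofReal] at this
  set F := ∫⁻ x, ENNReal.ofReal (f x)
  set G := ∫⁻ x, ENNReal.ofReal (g x)
  set K := ∫⁻ x, ENNReal.ofReal (h x)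
  have h4 := (ennreal_four_mul _ _).trans (pow_le_pow_left' this 2)
  have e1 : 4 * (ENNReal.ofReal a⁻¹ * F * (ENNReal.ofReal b⁻¹ * G))
      = (4 * ENNReal.ofReal ((a * b)⁻¹)) * (F * G) := by
    rw [mul_inv, ENNReal.ofReal_mul (inv_nonneg.mpr ha0.le)]; ring
  have e2 : (2 * (ENNReal.ofReal s⁻¹ * K)) ^ 2 = (4 * ENNReal.ofReal ((a * b)⁻¹)) * K ^ 2 := by
    rw [← hs2, ← inv_pow, ENNReal.ofReal_pow (inv_nonneg.mpr hs.le)]; ring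
  rw [e1, e2] at h4
  have hc0 : 4 * ENNReal.ofReal ((a * b)⁻¹) ≠ 0 := by
    simp [ENNReal.ofReal_eq_zero]
    positivity
  have hct : 4 * ENNReal.ofReal ((a * b)⁻¹) ≠ ⊤ := ENNReal.mul_ne_top (by norm_num) ENNReal.ofReal_ne_top
  exact (ENNReal.mul_le_mul_iff_right hc0 hct).mp h4

lemma pl1 (f g h : ℝ → ℝ≥0∞) (hf : Measurable f) (hg : Measurable g) (hh : Measurable h)
    (H : ∀ x y, f x * g y ≤ h ((x + y) / 2) ^ 2) :
    (∫⁻ x, f x) * (∫⁻ x, g x) ≤ (∫⁻ x, h x) ^ 2 := by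
  have tr : ∀ u : ℝ → ℝ≥0∞, Measurable u → ∫⁻ x, u x = ⨆ n : ℕ, ∫⁻ x, min (u x) n := by
    intro u hu
    rw [← lintegral_iSup (fun n => hu.min measurable_const)]
    · congr 1
      ext x
      rw [← inf_iSup_eq, ENNReal.iSup_natCast, inf_top_eq]
    · intro n m hnm x
      exact min_le_min le_rfl (by exact_mod_cast hnm)
  rw [tr f hf, tr g hg]
  rw [ENNReal.iSup_mul]
  refine iSup_le fun i => ?_
  rw [ENNReal.mul_iSup]
  refine iSup_le fun j => ?_
  set M : ℝ≥0∞ := max (i : ℝ≥0∞) j with hM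
  have hMt : M ≠ ⊤ := by simp [hM]
  have hfi : ∀ x, min (f x) i ≠ ⊤ := fun x => ne_top_of_le_ne_top (by simp) (min_le_right _ (i : ℝ≥0∞))
  have hgj : ∀ x, min (g x) j ≠ ⊤ := fun x => ne_top_of_le_ne_top (by simp) (min_le_right _ (j : ℝ≥0∞))
  have hhM : ∀ x, min (h x) M ≠ ⊤ := fun x => ne_top_of_le_ne_top hMt (min_le_right _ _)
  have := pl_bdd (fun x => (min (f x) i).toReal) (fun x => (min (g x) j).toReal)
    (fun x => (min (h x) M).toReal) (hf.min measurable_const).ennreal_toReal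
    (hg.min measurable_const).ennreal_toReal (hh.min measurable_const).ennreal_toReal
    (fun _ => ENNReal.toReal_nonneg) (fun _ => ENNReal.toReal_nonneg)
    (fun _ => ENNReal.toReal_nonneg) M.toReal
    (fun x => ENNReal.toReal_mono hMt ((min_le_right _ _).trans (le_max_left _ _)))
    (fun x => ENNReal.toReal_mono hMt ((min_le_right _ _).trans (le_max_right _ _)))
    (fun x y => by
      rw [← ENNReal.toReal_mul, ← ENNReal.toReal_pow]
      refine ENNReal.toReal_mono (ENNReal.pow_ne_top (hhM _)) ?_
      rcases le_total (h ((x + y) / 2)) M with hc | hc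
      · rw [min_eq_left hc]
        exact le_trans (mul_le_mul' (min_le_left _ _) (min_le_left _ _)) (H x y)
      · rw [min_eq_right hc, sq]
        exact mul_le_mul' ((min_le_right _ _).trans (le_max_left _ _))
          ((min_le_right _ _).trans (le_max_right _ _)))
  simp only [ENNReal.ofReal_toReal (hfi _), ENNReal.ofReal_toReal (hgj _),
    ENNReal.ofReal_toReal (hhM _)] at this
  refine this.trans (pow_le_pow_left' (lintegral_mono fun x => min_le_left _ _) 2)

lemma lint_succ (n : ℕ) (f : (Fin (n+1) → ℝ) → ℝ≥0∞) (hf : Measurable f) :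
    ∫⁻ x, f x = ∫⁻ t : ℝ, ∫⁻ x : Fin n → ℝ, f (Fin.cons t x) := by
  have e := (volume_preserving_piFinSuccAbove (fun _ : Fin (n+1) => ℝ) 0).symm
  rw [← e.lintegral_comp hf, Measure.volume_eq_prod, lintegral_prod]
  · refine lintegral_congr fun t => lintegral_congr fun x => ?_
    congr 1
    ext i
    refine Fin.cases ?_ (fun i => ?_) i <;> simp [MeasurableEquiv.piFinSuccAbove]
  · exact (hf.comp (MeasurableEquiv.measurable _)).aemeasurable

lemma pl_n (n : ℕ) (f g h : (Fin n → ℝ) → ℝ≥0∞) (hf : Measurable f) (hg : Measurable g)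
    (hh : Measurable h)
    (H : ∀ x y, f x * g y ≤ h (fun i => (x i + y i) / 2) ^ 2) :
    (∫⁻ x, f x) * (∫⁻ x, g x) ≤ (∫⁻ x, h x) ^ 2 := by
  induction n with
  | zero =>
    rw [lintegral_unique, lintegral_unique, lintegral_unique]
    have : (volume : Measure (Fin 0 → ℝ)) Set.univ = 1 := by
      rw [volume_pi, Measure.pi_of_empty _ default]; simp
    rw [this, mul_one, mul_one, mul_one]
    convert H default default
  | succ n ih =>
    rw [lint_succ n f hf, lint_succ n g hg, lint_succ n h hh]
    have mc : Measurable (fun p : ℝ × (Fin n → ℝ) => (Fin.cons p.1 p.2 : Fin (n+1) → ℝ)) := by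
      refine measurable_pi_iff.mpr ?_
      intro i
      refine Fin.cases ?_ (fun i => ?_) i
      · simpa using measurable_fst
      · simp only [Fin.cons_succ]
        exact (measurable_pi_apply i).comp measurable_snd
    have mt : ∀ t : ℝ, Measurable (fun x : Fin n → ℝ => (Fin.cons t x : Fin (n+1) → ℝ)) :=
      fun t => mc.comp measurable_prodMk_left
    refine pl1 _ _ _ (hf.comp mc).lintegral_prod_right' (hg.comp mc).lintegral_prod_right'
      (hh.comp mc).lintegral_prod_right' ?_
    intro s t
    refine ih _ _ _ (hf.comp (mt _)) (hg.comp (mt _)) (hh.comp (mt _)) ?_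
    intro x y
    convert H (Fin.cons s x) (Fin.cons t y) using 3
    ext i
    refine Fin.cases ?_ (fun i => ?_) i <;> simp

/-- The quadratic form with `muR = exp (-HH)`. -/
noncomputable def HH (m : ℕ) (W α : ℝ) (x : Fin m → ℝ) : ℝ :=
  (1/2) * ∑ j ∈ Finset.Ico 1 m, (pad m x j - pad m x (j-1))^2
    + (α / W^2) * ∑ j ∈ Finset.range m, (pad m x j)^2

lemma muR_eq (m : ℕ) (W α : ℝ) (x : Fin m → ℝ) : muR m W α x = Real.exp (-HH m W α x) := by
  unfold muR HH; congr 1; ring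

lemma pad_mid (m : ℕ) (x y : Fin m → ℝ) (j : ℕ) :
    pad m (fun i => (x i + y i) / 2) j = (pad m x j + pad m y j) / 2 := by
  unfold pad; split_ifs <;> simp

lemma pad_sub (m : ℕ) (x y : Fin m → ℝ) (j : ℕ) :
    pad m (x - y) j = pad m x j - pad m y j := by
  unfold pad; split_ifs <;> simp

lemma pad_neg (m : ℕ) (x : Fin m → ℝ) (j : ℕ) : pad m (-x) j = - pad m x j := by
  unfold pad; split_ifs <;> simp

lemma muR_neg (m : ℕ) (W α : ℝ) (x : Fin m → ℝ) : muR m W α (-x) = muR m W α x := by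
  unfold muR
  have h1 : ∀ j, (pad m (-x) j - pad m (-x) (j-1))^2 = (pad m x j - pad m x (j-1))^2 := by
    intro j; rw [pad_neg, pad_neg]; ring
  have h2 : ∀ j, (pad m (-x) j)^2 = (pad m x j)^2 := by
    intro j; rw [pad_neg]; ring
  simp only [h1, h2]

lemma HH_mid (m : ℕ) (W α : ℝ) (x y : Fin m → ℝ) :
    HH m W α x + HH m W α y =
      2 * HH m W α (fun i => (x i + y i) / 2) + 1/2 * HH m W α (x - y) := by
  unfold HH
  have h1 : ∑ j ∈ Finset.Ico 1 m, (pad m x j - pad m x (j-1))^2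
      + ∑ j ∈ Finset.Ico 1 m, (pad m y j - pad m y (j-1))^2
      = 2 * ∑ j ∈ Finset.Ico 1 m, (pad m (fun i => (x i + y i) / 2) j
          - pad m (fun i => (x i + y i) / 2) (j-1))^2
      + 1/2 * ∑ j ∈ Finset.Ico 1 m, (pad m (x - y) j - pad m (x - y) (j-1))^2 := by
    rw [← Finset.sum_add_distrib, Finset.mul_sum, Finset.mul_sum, ← Finset.sum_add_distrib]
    refine Finset.sum_congr rfl fun j _ => ?_
    simp only [pad_mid, pad_sub]; ring
  have h2 : ∑ j ∈ Finset.range m, (pad m x j)^2 + ∑ j ∈ Finset.range m, (pad m y j)^2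
      = 2 * ∑ j ∈ Finset.range m, (pad m (fun i => (x i + y i) / 2) j)^2
      + 1/2 * ∑ j ∈ Finset.range m, (pad m (x - y) j)^2 := by
    rw [← Finset.sum_add_distrib, Finset.mul_sum, Finset.mul_sum, ← Finset.sum_add_distrib]
    refine Finset.sum_congr rfl fun j _ => ?_
    simp only [pad_mid, pad_sub]; ring
  linear_combination (1/2) * h1 + (α / W^2) * h2

lemma sum_pad_sq (m : ℕ) (x : Fin m → ℝ) :
    ∑ j ∈ Finset.range m, (pad m x j)^2 = ∑ j, (x j)^2 := by
  rw [Finset.sum_range]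
  refine Finset.sum_congr rfl fun j _ => ?_
  simp [pad]

lemma HH_ge (m : ℕ) (W α : ℝ) (x : Fin m → ℝ) :
    (α / W^2) * ∑ j, (x j)^2 ≤ HH m W α x := by
  unfold HH
  rw [sum_pad_sq]
  have : 0 ≤ ∑ j ∈ Finset.Ico 1 m, (pad m x j - pad m x (j-1))^2 :=
    Finset.sum_nonneg fun _ _ => sq_nonneg _
  linarith

lemma sobolev (m : ℕ) (W : ℝ) (hW : 0 < W) (hWm : W ≤ m) (z : ℕ → ℝ) (j : ℕ) (hj : j < m) :
    z j ^ 2 ≤ (3 / W) * ∑ i ∈ Finset.range m, z i ^ 2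
      + (W / 2) * ∑ k ∈ Finset.Ico 1 m, (z k - z (k-1))^2 := by
  set S := ∑ i ∈ Finset.range m, z i ^ 2 with hS
  set D := ∑ k ∈ Finset.Ico 1 m, (z k - z (k-1))^2 with hD
  have hm : 0 < m := by omega
  have hmR : (0:ℝ) < m := by exact_mod_cast hm
  have S0 : 0 ≤ S := Finset.sum_nonneg fun _ _ => sq_nonneg _
  set a : ℕ → ℝ := fun k => |z k ^ 2 - z (k-1) ^ 2| with ha
  have hT : ∑ k ∈ Finset.Ico 1 m, a k ≤ (W / 2) * D + (2 / W) * S := by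
    have h1 : ∀ k ∈ Finset.Ico 1 m, a k ≤ (W/2) * (z k - z (k-1))^2
        + (1 / W) * (z k ^ 2 + z (k-1) ^ 2) := by
      intro k _
      have e : (1 / W) * (z k ^ 2 + z (k-1) ^ 2) = (2 * z k ^ 2 + 2 * z (k-1) ^ 2) / (2 * W) := by
        field_simp
      have e2 : (1/W) * (z k ^ 2 + z (k-1) ^ 2) ≥ (z k + z (k-1))^2 / (2 * W) := by
        rw [e]
        gcongr
        nlinarith [sq_nonneg (z k - z (k-1))]
      have e3 : |z k ^ 2 - z (k-1) ^ 2| ≤ (W/2) * (z k - z (k-1))^2 + (z k + z (k-1))^2 / (2 * W) := by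
        have e4 : (W/2) * (z k - z (k-1))^2 + (z k + z (k-1))^2 / (2 * W)
            = ((W * (z k - z (k-1)))^2 + (z k + z (k-1))^2) / (2 * W) := by field_simp
        rw [e4, le_div_iff₀ (by positivity)]
        rcases abs_cases (z k ^ 2 - z (k-1) ^ 2) with ⟨h, _⟩ | ⟨h, _⟩ <;> rw [h]
        · nlinarith [sq_nonneg (W * (z k - z (k-1)) - (z k + z (k-1)))]
        · nlinarith [sq_nonneg (W * (z k - z (k-1)) + (z k + z (k-1)))]
      simp only [ha]
      linarith
    refine (Finset.sum_le_sum h1).trans ?_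
    rw [Finset.sum_add_distrib, ← Finset.mul_sum, ← Finset.mul_sum, Finset.sum_add_distrib]
    have h2 : ∑ k ∈ Finset.Ico 1 m, z k ^ 2 ≤ S := by
      refine Finset.sum_le_sum_of_subset_of_nonneg ?_ fun _ _ _ => sq_nonneg _
      intro k hk; simp at hk ⊢; omega
    have h3 : ∑ k ∈ Finset.Ico 1 m, z (k-1) ^ 2 ≤ S := by
      rw [Finset.sum_Ico_eq_sum_range]
      simp only [Nat.add_sub_cancel_left]
      refine Finset.sum_le_sum_of_subset_of_nonneg ?_ fun _ _ _ => sq_nonneg _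
      intro k hk; simp at hk ⊢; omega
    have h4 : (1 / W) * (∑ k ∈ Finset.Ico 1 m, z k ^ 2 + ∑ k ∈ Finset.Ico 1 m, z (k-1) ^ 2)
        ≤ (1 / W) * (S + S) := by gcongr
    have h5 : (1 / W) * (S + S) = (2 / W) * S := by ring
    linarith
  have hpart : ∀ p q : ℕ, p ≤ q → q < m → |z q ^ 2 - z p ^ 2| ≤ ∑ k ∈ Finset.Ico (p+1) (q+1), a k := by
    intro p q hpq
    induction q, hpq using Nat.le_induction with
    | base => intro _; simp
    | succ q hq ih =>
      intro hm'
      rw [Finset.sum_Ico_succ_top (by omega)]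
      have := ih (by omega)
      simp only [ha, Nat.add_sub_cancel] at this ⊢
      calc |z (q+1) ^ 2 - z p ^ 2| = |(z q ^ 2 - z p ^ 2) + (z (q+1)^2 - z q ^ 2)| := by
            congr 1; ring
        _ ≤ _ := (abs_add_le _ _).trans (by linarith)
  have hpart2 : ∀ p q : ℕ, p ≤ q → q < m → |z q ^ 2 - z p ^ 2| ≤ (W / 2) * D + (2 / W) * S := by
    intro p q hpq hq
    refine (hpart p q hpq hq).trans (le_trans ?_ hT)
    refine Finset.sum_le_sum_of_subset_of_nonneg ?_ fun _ _ _ => abs_nonneg _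
    intro k hk; simp at hk ⊢; omega
  have hij : ∀ i ∈ Finset.range m, z j ^ 2 ≤ z i ^ 2 + ((W / 2) * D + (2 / W) * S) := by
    intro i hi
    have hi' : i < m := by simpa using hi
    rcases le_total i j with h | h
    · have := (abs_le.mp (hpart2 i j h hj)).2; linarith
    · have := (abs_le.mp (hpart2 j i h hi')).1; linarith
  have hsum := Finset.sum_le_sum hij
  rw [Finset.sum_add_distrib] at hsum
  simp only [Finset.sum_const, Finset.card_range, nsmul_eq_mul] at hsum
  rw [← hS] at hsum
  have h6 : z j ^ 2 ≤ (1 / m) * S + ((W / 2) * D + (2 / W) * S) := by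
    have : (1 / (m:ℝ)) * S + ((W / 2) * D + (2 / W) * S)
      = (S + m * ((W / 2) * D + (2 / W) * S)) / m := by field_simp
    rw [this, le_div_iff₀ hmR]; linarith
  have h7 : (1 / (m:ℝ)) * S ≤ (1 / W) * S := by gcongr
  have h8 : (3 / W) * S = (1 / W) * S + (2 / W) * S := by ring
  linarith

lemma coord_sq_le (m : ℕ) (W α : ℝ) (hα : 0 < α) (hW : 0 < W) (hWm : W ≤ m)
    (z : Fin m → ℝ) (j : Fin m) : z j ^ 2 ≤ (1 + 3 / α) * W * HH m W α z := by
  have h := sobolev m W hW hWm (pad m z) j j.2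
  have e : pad m z j = z j := by simp [pad]
  rw [e] at h
  unfold HH
  set S := ∑ i ∈ Finset.range m, pad m z i ^ 2 with hS
  set D := ∑ k ∈ Finset.Ico 1 m, (pad m z k - pad m z (k-1))^2 with hD
  have S0 : 0 ≤ S := Finset.sum_nonneg fun _ _ => sq_nonneg _
  have D0 : 0 ≤ D := Finset.sum_nonneg fun _ _ => sq_nonneg _
  have : (1 + 3 / α) * W * (1 / 2 * D + α / W ^ 2 * S)
      = (3 / W) * S + (W / 2) * D + (α / W * S + 3 / α * W / 2 * D) := by
    field_simp; ring
  rw [this]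
  have : 0 ≤ α / W * S + 3 / α * W / 2 * D := by positivity
  linarith

lemma continuous_pad (m : ℕ) (j : ℕ) : Continuous (fun x : Fin m → ℝ => pad m x j) := by
  unfold pad
  split_ifs
  · exact continuous_apply _
  · exact continuous_const

lemma continuous_muR (m : ℕ) (W α : ℝ) : Continuous (muR m W α) := by
  unfold muR
  have := continuous_pad m
  fun_prop

lemma box_eq (m : ℕ) (r : ℝ) : box m r = Set.pi Set.univ (fun _ => Set.Icc (-r) r) := by
  ext x; simp only [box, Set.mem_pi, Set.mem_univ, true_imp_iff, Set.mem_Icc, ← abs_le]; rfl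

lemma box_compact (m : ℕ) (r : ℝ) : IsCompact (box m r) := by
  rw [box_eq]; exact isCompact_univ_pi fun _ => isCompact_Icc

lemma box_int (m : ℕ) (r : ℝ) (f : (Fin m → ℝ) → ℝ) (hf : Continuous f) :
    IntegrableOn f (box m r) := hf.continuousOn.integrableOn_compact (box_compact m r)

lemma muR_pos (m : ℕ) (W α : ℝ) (x : Fin m → ℝ) : 0 < muR m W α x := Real.exp_pos _

lemma tau (m : ℕ) (W α r : ℝ) (φ ψ : (Fin m → ℝ) → ℝ) (hφ : Continuous φ) (hψ : Continuous ψ)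
    (H : ∀ x ∈ box m r, ∀ y ∈ box m r, φ x + ψ y ≤ 1/2 * HH m W α (x - y)) :
    (∫ x in box m r, Real.exp (φ x) * muR m W α x) * (∫ x in box m r, Real.exp (ψ x) * muR m W α x)
      ≤ (∫ x in box m r, muR m W α x) ^ 2 := by
  have hbm : MeasurableSet (box m r) := (box_compact m r).measurableSet
  have cm := continuous_muR m W α
  have conv : ∀ f : (Fin m → ℝ) → ℝ, Continuous f → (∀ x, 0 ≤ f x) →
      ENNReal.ofReal (∫ x in box m r, f x)
        = ∫⁻ x, (box m r).indicator (fun x => ENNReal.ofReal (f x)) x := by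
    intro f hf f0
    rw [lintegral_indicator hbm, ofReal_integral_eq_lintegral_ofReal (box_int m r f hf)]
    exact Filter.Eventually.of_forall f0
  have nn : ∀ f : (Fin m → ℝ) → ℝ, (∀ x, 0 ≤ f x) → 0 ≤ ∫ x in box m r, f x :=
    fun f f0 => integral_nonneg f0
  have c1 : Continuous (fun x => Real.exp (φ x) * muR m W α x) := by fun_prop
  have c2 : Continuous (fun x => Real.exp (ψ x) * muR m W α x) := by fun_prop
  have p1 : ∀ x, 0 ≤ Real.exp (φ x) * muR m W α x :=
    fun x => mul_nonneg (Real.exp_pos _).le (muR_pos m W α x).le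
  have p2 : ∀ x, 0 ≤ Real.exp (ψ x) * muR m W α x :=
    fun x => mul_nonneg (Real.exp_pos _).le (muR_pos m W α x).le
  have p3 : ∀ x, 0 ≤ muR m W α x := fun x => (muR_pos m W α x).le
  have key := pl_n m ((box m r).indicator (fun x => ENNReal.ofReal (Real.exp (φ x) * muR m W α x)))
    ((box m r).indicator (fun x => ENNReal.ofReal (Real.exp (ψ x) * muR m W α x)))
    ((box m r).indicator (fun x => ENNReal.ofReal (muR m W α x)))
    (c1.measurable.ennreal_ofReal.indicator hbm) (c2.measurable.ennreal_ofReal.indicator hbm)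
    (cm.measurable.ennreal_ofReal.indicator hbm) (by
      intro x y
      by_cases hx : x ∈ box m r
      swap
      · simp [hx]
      by_cases hy : y ∈ box m r
      swap
      · simp [hy]
      have hxy : (fun i => (x i + y i) / 2) ∈ box m r := by
        intro i
        have h1 := abs_le.mp (hx i)
        have h2 := abs_le.mp (hy i)
        rw [abs_le]; constructor <;> linarith
      rw [Set.indicator_of_mem hx, Set.indicator_of_mem hy, Set.indicator_of_mem hxy,
        ← ENNReal.ofReal_mul (p1 x), ← ENNReal.ofReal_pow (p3 _)]
      apply ENNReal.ofReal_le_ofReal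
      simp only [muR_eq]
      rw [← Real.exp_add, ← Real.exp_add, ← Real.exp_add, ← Real.exp_nat_mul]
      apply Real.exp_le_exp.mpr
      have h1 := H x hx y hy
      have h2 := HH_mid m W α x y
      push_cast
      linarith)
  rw [← conv _ c1 p1, ← conv _ c2 p2, ← conv _ cm p3, ← ENNReal.ofReal_mul (nn _ p1),
    ← ENNReal.ofReal_pow (nn _ p3)] at key
  exact (ENNReal.ofReal_le_ofReal_iff (sq_nonneg _)).mp key

lemma box_symm (m : ℕ) (W α r : ℝ) (f : (Fin m → ℝ) → ℝ) :
    ∫ x in box m r, f (-x) * muR m W α x = ∫ x in box m r, f x * muR m W α x := by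
  have hbm : MeasurableSet (box m r) := (box_compact m r).measurableSet
  rw [← integral_indicator hbm, ← integral_indicator hbm,
    ← integral_neg_eq_self ((box m r).indicator fun x => f x * muR m W α x) volume]
  refine integral_congr_ae (Filter.Eventually.of_forall fun x => ?_)
  have hx : -x ∈ box m r ↔ x ∈ box m r := by
    constructor <;> intro h i <;> simpa using h i
  by_cases h : x ∈ box m r
  · simp only [Set.indicator_of_mem h, Set.indicator_of_mem (hx.mpr h), muR_neg]
  · simp only [Set.indicator_of_notMem h, Set.indicator_of_notMem (fun h' => h (hx.mp h'))]

lemma moment4 (m : ℕ) (W α r : ℝ) (hα : 0 < α) (hW : 0 < W) (hWm : W ≤ m) (j : Fin m) :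
    ∫ x in box m r, (x j) ^ 4 * muR m W α x
      ≤ 48 * Real.exp ((1 + 3 / α) / 4) * W ^ 2 * ∫ x in box m r, muR m W α x := by
  set K := 1 + 3 / α with hK
  have hK0 : 0 < K := by positivity
  have cm := continuous_muR m W α
  set Z := ∫ x in box m r, muR m W α x with hZ
  have hZ0 : 0 ≤ Z := integral_nonneg fun x => (muR_pos m W α x).le
  set l := (Real.sqrt W)⁻¹ with hl
  have hl2 : l ^ 2 = W⁻¹ := by rw [hl, inv_pow, Real.sq_sqrt hW.le]
  have ht := tau m W α r (fun x => l * x j - K / 2) (fun x => -(l * x j)) (by fun_prop) (by fun_prop)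
    (by
      intro x _ y _
      have h := coord_sq_le m W α hα hW hWm (x - y) j
      simp only [Pi.sub_apply] at h
      set z := x j - y j
      set A := HH m W α (x - y)
      have h1 : (l * z) ^ 2 ≤ K * A := by
        rw [mul_pow, hl2, inv_mul_le_iff₀ hW]; linarith
      have h2 : 2 * (l * z) * K ≤ (l * z)^2 + K ^ 2 := by nlinarith [sq_nonneg (l * z - K)]
      have h3 : K * (l * z) ≤ K * (A / 2 + K / 2) := by nlinarith
      have h4 := le_of_mul_le_mul_left h3 hK0
      have : l * x j - K / 2 + -(l * y j) = l * z - K / 2 := by ring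
      linarith)
  set E := ∫ x in box m r, Real.exp (l * x j) * muR m W α x with hE
  have hE0 : 0 ≤ E := integral_nonneg fun x => mul_nonneg (Real.exp_pos _).le (muR_pos m W α x).le
  have e1 : ∫ x in box m r, Real.exp (l * x j - K / 2) * muR m W α x = Real.exp (-(K/2)) * E := by
    rw [hE, ← integral_const_mul]
    congr 1; ext x; rw [sub_eq_add_neg, Real.exp_add]; ring
  have e2 : ∫ x in box m r, Real.exp (-(l * x j)) * muR m W α x = E := by
    rw [hE, ← box_symm m W α r (fun x => Real.exp (l * x j))]
    simp
  rw [e1, e2] at ht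
  have h5 : E ≤ Real.exp (K / 4) * Z := by
    refine le_of_sq_le_sq ?_ (by positivity)
    rw [mul_pow, ← Real.exp_nat_mul]
    have : Real.exp ((2:ℕ) * (K / 4)) * Real.exp (-(K/2)) = 1 := by
      rw [← Real.exp_add]; simp; ring
    calc E ^ 2 = Real.exp ((2:ℕ) * (K / 4)) * (Real.exp (-(K/2)) * E * E) := by
          rw [← mul_assoc, ← mul_assoc, this]; ring
      _ ≤ _ := mul_le_mul_of_nonneg_left ht (Real.exp_pos _).le
  have h6 : ∫ x in box m r, (x j) ^ 4 * muR m W α x ≤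
      ∫ x in box m r, 24 * W ^ 2 * (Real.exp (l * x j) * muR m W α x +
        Real.exp (-(l * x j)) * muR m W α x) := by
    refine integral_mono (box_int m r _ (by fun_prop)) (box_int m r _ (by fun_prop)) ?_
    intro x
    have h7 := Real.pow_div_factorial_le_exp |l * x j| (abs_nonneg _) 4
    have h8 : |l * x j| ^ 4 = x j ^ 4 / W ^ 2 := by
      rw [show |l * x j| ^ 4 = (|l * x j| ^ 2) ^ 2 by ring, sq_abs, mul_pow, hl2]
      field_simp
    rw [h8] at h7
    have h9 : Real.exp |l * x j| ≤ Real.exp (l * x j) + Real.exp (-(l * x j)) := by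
      rcases abs_cases (l * x j) with ⟨h, _⟩ | ⟨h, _⟩ <;> rw [h]
      · linarith [Real.exp_pos (-(l * x j))]
      · linarith [Real.exp_pos (l * x j)]
    have h10 : x j ^ 4 ≤ 24 * W ^ 2 * (Real.exp (l * x j) + Real.exp (-(l * x j))) := by
      have h11 := h7.trans h9
      rw [div_div, div_le_iff₀ (by positivity)] at h11
      have : ((Nat.factorial 4 : ℕ) : ℝ) = 24 := by norm_num [Nat.factorial]
      rw [this] at h11
      linarith
    have := mul_le_mul_of_nonneg_right h10 (muR_pos m W α x).le
    simp only
    linarith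
  refine h6.trans ?_
  rw [integral_const_mul, integral_add (box_int m r _ (by fun_prop)) (box_int m r _ (by fun_prop)), e2]
  rw [← hE]
  nlinarith [mul_le_mul_of_nonneg_left h5 (show (0:ℝ) ≤ 48 * W ^ 2 by positivity)]

lemma core (m : ℕ) (W α δ : ℝ) (hα : 0 < α) (hW : 0 < W) (hWm : W ≤ m) (hδ : δ ≤ 1)
    (g : ℝ → ℝ) (hg : Continuous g) (C : ℝ) (hC : 0 ≤ C)
    (hg1 : ∀ s, |s| ≤ 1 → |g s + g (-s)| ≤ 2 * C * s ^ 4)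
    (hg2 : ∀ s t, |s| ≤ δ → |t| ≤ δ → g s - C * s ^ 4 - g t ≤ α / 2 * (s - t) ^ 2)
    (B : ℝ) (hB : B = 48 * Real.exp ((1 + 3 / α) / 4)) :
    (1 - C * B * (m / W ^ 2)) * (∫ x in box m (δ * W), muR m W α x)
      ≤ (∫ x in box m (δ * W), Real.exp (-(∑ j, g (x j / W))) * muR m W α x) ∧
    ((1 - 2 * C * B * (m / W ^ 2)) * (∫ x in box m (δ * W), muR m W α x)) *
      (∫ x in box m (δ * W), Real.exp (-(∑ j, g (x j / W))) * muR m W α x)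
      ≤ (∫ x in box m (δ * W), muR m W α x) ^ 2 := by
  have cm := continuous_muR m W α
  have hbm : MeasurableSet (box m (δ * W)) := (box_compact m _).measurableSet
  set Z := ∫ x in box m (δ * W), muR m W α x with hZ
  set X := ∫ x in box m (δ * W), Real.exp (-(∑ j, g (x j / W))) * muR m W α x with hX
  have hX0 : 0 ≤ X := integral_nonneg fun x => mul_nonneg (Real.exp_pos _).le (muR_pos m W α x).le
  set G : (Fin m → ℝ) → ℝ := fun x => ∑ j, g (x j / W) with hG
  set Q : (Fin m → ℝ) → ℝ := fun x => ∑ j, (x j / W) ^ 4 with hQ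
  have cG : Continuous G := by fun_prop
  have cQ : Continuous Q := by fun_prop
  set IG := ∫ x in box m (δ * W), G x * muR m W α x with hIG
  set IQ := ∫ x in box m (δ * W), Q x * muR m W α x with hIQ
  have hs : ∀ x ∈ box m (δ * W), ∀ j, |x j / W| ≤ δ := by
    intro x hx j
    rw [abs_div, abs_of_pos hW, div_le_iff₀ hW]
    exact hx j
  have bQ : IQ ≤ B * (m / W ^ 2) * Z := by
    have : IQ = ∑ j : Fin m, (W ^ 4)⁻¹ * ∫ x in box m (δ * W), (x j) ^ 4 * muR m W α x := by
      rw [hIQ]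
      simp only [hQ, Finset.sum_mul]
      rw [integral_finsetSum _ (fun j _ => box_int m _ _ (by fun_prop))]
      refine Finset.sum_congr rfl fun j _ => ?_
      rw [← integral_const_mul]
      congr 1; ext x; rw [div_pow]; ring
    rw [this]
    have h1 : ∀ j ∈ (Finset.univ : Finset (Fin m)), (W ^ 4)⁻¹ * ∫ x in box m (δ * W), (x j) ^ 4 * muR m W α x
        ≤ B / W ^ 2 * Z := by
      intro j _
      have h := moment4 m W α (δ * W) hα hW hWm j
      rw [← hB, ← hZ] at h
      rw [inv_mul_le_iff₀ (by positivity)]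
      refine h.trans (le_of_eq ?_)
      field_simp
    refine (Finset.sum_le_sum h1).trans (le_of_eq ?_)
    simp; ring
  have bG : |IG| ≤ C * IQ := by
    have h1 : 2 * IG = ∫ x in box m (δ * W), (G x + G (-x)) * muR m W α x := by
      have : ∀ x, (G x + G (-x)) * muR m W α x = G x * muR m W α x + G (-x) * muR m W α x :=
        fun x => add_mul _ _ _
      simp only [this]
      rw [integral_add (box_int m _ _ (by fun_prop)) (box_int m _ _ (by fun_prop)),
        box_symm m W α (δ * W) G]
      ring
    have h2 : |2 * IG| ≤ 2 * (C * IQ) := by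
      rw [h1]
      refine (abs_integral_le_integral_abs).trans ?_
      have : 2 * (C * IQ) = ∫ x in box m (δ * W), 2 * C * (Q x * muR m W α x) := by
        rw [integral_const_mul]; ring
      rw [this]
      refine setIntegral_mono_on (box_int m _ _ (by fun_prop)) (box_int m _ _ (by fun_prop)) hbm ?_
      intro x hx
      rw [abs_mul, abs_of_pos (muR_pos m W α x), ← mul_assoc]
      refine mul_le_mul_of_nonneg_right ?_ (muR_pos m W α x).le
      simp only [hG, hQ]
      rw [← Finset.sum_add_distrib, Finset.mul_sum]
      refine (Finset.abs_sum_le_sum_abs _ _).trans (Finset.sum_le_sum fun j _ => ?_)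
      have := hg1 (x j / W) ((hs x hx j).trans hδ)
      simpa [neg_div] using this
    rw [abs_mul, abs_two] at h2
    linarith
  have bG' := abs_le.mp bG
  have hCQ : C * IQ ≤ C * (B * (m / W ^ 2) * Z) := mul_le_mul_of_nonneg_left bQ hC
  constructor
  · have h1 : Z - IG ≤ X := by
      rw [hZ, hIG, hX, ← integral_sub (box_int m _ _ cm) (box_int m _ _ (by fun_prop))]
      refine integral_mono (box_int m _ _ (by fun_prop)) (box_int m _ _ (by fun_prop)) ?_
      intro x
      have h2 := Real.add_one_le_exp (-(G x))
      have h3 := mul_le_mul_of_nonneg_right h2 (muR_pos m W α x).le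
      simp only [hG] at h3 ⊢
      linarith
    linarith
  · have ht := tau m W α (δ * W) (fun x => G x - C * Q x) (fun x => - G x) (by fun_prop) (by fun_prop)
      (by
        intro x hx y hy
        have h1 := HH_ge m W α (x - y)
        have h2 : G x - C * Q x + -G y ≤ 1/2 * ((α / W^2) * ∑ j, ((x - y) j)^2) := by
          simp only [hG, hQ]
          rw [Finset.mul_sum, Finset.mul_sum, Finset.mul_sum, ← Finset.sum_sub_distrib,
            ← sub_eq_add_neg, ← Finset.sum_sub_distrib]
          refine Finset.sum_le_sum fun j _ => ?_
          refine (hg2 _ _ (hs x hx j) (hs y hy j)).trans (le_of_eq ?_)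
          simp only [Pi.sub_apply]
          field_simp
        linarith)
    have h3 : Z + IG - C * IQ ≤ ∫ x in box m (δ * W), Real.exp (G x - C * Q x) * muR m W α x := by
      have e : Z + IG - C * IQ
          = ∫ x in box m (δ * W), (muR m W α x + G x * muR m W α x - C * (Q x * muR m W α x)) := by
        rw [integral_sub (box_int m _ _ (by fun_prop)) (box_int m _ _ (by fun_prop)),
          integral_add (box_int m _ _ (by fun_prop)) (box_int m _ _ (by fun_prop)), integral_const_mul]
      rw [e]
      refine integral_mono (box_int m _ _ (by fun_prop)) (box_int m _ _ (by fun_prop)) ?_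
      intro x
      have h2 := Real.add_one_le_exp (G x - C * Q x)
      have h3 := mul_le_mul_of_nonneg_right h2 (muR_pos m W α x).le
      simp only
      linarith
    refine le_trans (mul_le_mul_of_nonneg_right ?_ hX0) ht
    linarith

lemma poly_bounds (q : ℕ) (c : ℕ → ℝ) (α : ℝ) (hα : 0 < α) :
    ∃ C δ₀ : ℝ, 0 ≤ C ∧ 0 < δ₀ ∧ δ₀ ≤ 1 ∧
      (∀ s : ℝ, |s| ≤ 1 → |(∑ i ∈ Finset.Icc 3 q, c i * s ^ i)
        + (∑ i ∈ Finset.Icc 3 q, c i * (-s) ^ i)| ≤ 2 * C * s ^ 4) ∧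
      (∀ s t : ℝ, |s| ≤ δ₀ → |t| ≤ δ₀ → (∑ i ∈ Finset.Icc 3 q, c i * s ^ i) - C * s ^ 4
        - (∑ i ∈ Finset.Icc 3 q, c i * t ^ i) ≤ α / 2 * (s - t) ^ 2) := by
  set D := ∑ i ∈ Finset.Icc 3 q, |c i| * i with hD
  have D0 : 0 ≤ D := Finset.sum_nonneg fun i _ => by positivity
  refine ⟨D + 9 * D ^ 2 / α, min 1 (α / (16 * (D + 1))), by positivity, by positivity,
    min_le_left _ _, ?_, ?_⟩
  · intro s hs
    have h1 : |(∑ i ∈ Finset.Icc 3 q, c i * s ^ i) + (∑ i ∈ Finset.Icc 3 q, c i * (-s) ^ i)|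
        ≤ 2 * D * s ^ 4 := by
      rw [← Finset.sum_add_distrib, hD, Finset.mul_sum, Finset.sum_mul]
      refine (Finset.abs_sum_le_sum_abs _ _).trans (Finset.sum_le_sum fun i hi => ?_)
      have hi3 : 3 ≤ i := (Finset.mem_Icc.mp hi).1
      have hiR : (1:ℝ) ≤ i := by exact_mod_cast (by omega : 1 ≤ i)
      have s4 : 0 ≤ s ^ 4 := by positivity
      rcases Nat.even_or_odd i with he | ho
      · rw [he.neg_pow]
        have hi4 : 4 ≤ i := by
          rcases he with ⟨k, rfl⟩; omega
        have h2 : |s ^ i| ≤ s ^ 4 := by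
          rw [abs_pow]
          calc |s| ^ i ≤ |s| ^ 4 := pow_le_pow_of_le_one (abs_nonneg _) hs hi4
            _ = s ^ 4 := by rw [show |s| ^ 4 = (|s| ^ 2) ^ 2 by ring, sq_abs]; ring
        rw [← two_mul, abs_mul, abs_two, abs_mul]
        have h3 : |c i| * |s ^ i| ≤ |c i| * s ^ 4 := mul_le_mul_of_nonneg_left h2 (abs_nonneg _)
        have h4 : |c i| * s ^ 4 * 1 ≤ |c i| * s ^ 4 * i :=
          mul_le_mul_of_nonneg_left hiR (by positivity)
        linarith
      · rw [ho.neg_pow]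
        have : c i * s ^ i + c i * -s ^ i = 0 := by ring
        rw [this, abs_zero]; positivity
    refine h1.trans ?_
    have : 0 ≤ 9 * D ^ 2 / α := by positivity
    gcongr
    linarith
  · intro s t hs ht
    set δ := min 1 (α / (16 * (D + 1))) with hδ
    have hδ0 : 0 < δ := by positivity
    have hδ1 : δ ≤ 1 := min_le_left _ _
    have hδ2 : δ * (16 * (D + 1)) ≤ α := by
      rw [← le_div_iff₀ (by positivity)]; exact min_le_right _ _
    have h1 : |(∑ i ∈ Finset.Icc 3 q, c i * s ^ i) - (∑ i ∈ Finset.Icc 3 q, c i * t ^ i)|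
        ≤ D * (|s - t| * (s ^ 2 + t ^ 2)) := by
      rw [← Finset.sum_sub_distrib, hD, Finset.sum_mul]
      refine (Finset.abs_sum_le_sum_abs _ _).trans (Finset.sum_le_sum fun i hi => ?_)
      have hi3 : 3 ≤ i := (Finset.mem_Icc.mp hi).1
      rw [← mul_sub, abs_mul, mul_assoc]
      refine mul_le_mul_of_nonneg_left ?_ (abs_nonneg _)
      refine (abs_pow_sub_pow_le s t i).trans ?_
      have h2 : max |s| |t| ^ (i - 1) ≤ s ^ 2 + t ^ 2 := by
        calc max |s| |t| ^ (i - 1) ≤ max |s| |t| ^ 2 :=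
              pow_le_pow_of_le_one (le_max_of_le_left (abs_nonneg _))
                (max_le (hs.trans hδ1) (ht.trans hδ1)) (by omega)
          _ ≤ _ := by
            rcases max_cases |s| |t| with ⟨h, _⟩ | ⟨h, _⟩ <;> rw [h, sq_abs]
            · linarith [sq_nonneg t]
            · linarith [sq_nonneg s]
      calc |s - t| * i * max |s| |t| ^ (i - 1) ≤ |s - t| * i * (s ^ 2 + t ^ 2) := by gcongr
        _ = _ := by ring
    have h2 := (abs_le.mp h1).2
    set u := |s - t| with hu
    have hu0 : 0 ≤ u := abs_nonneg _
    have hu2 : (s - t) ^ 2 = u ^ 2 := (sq_abs _).symm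
    have hub : u ≤ 2 * δ := by
      calc u ≤ |s| + |t| := abs_sub _ _
        _ ≤ _ := by linarith
    have ht2 : t ^ 2 ≤ 2 * s ^ 2 + 2 * u ^ 2 := by
      rw [← hu2]; nlinarith [sq_nonneg (2 * s - t)]
    have h3 : D * (u * (s ^ 2 + t ^ 2)) ≤ D * (u * (3 * s ^ 2 + 2 * u ^ 2)) := by
      refine mul_le_mul_of_nonneg_left (mul_le_mul_of_nonneg_left ?_ hu0) D0
      linarith
    have h4 : D * (2 * u * u ^ 2) ≤ α / 4 * u ^ 2 := by
      have : D * (2 * u) ≤ α / 4 := by nlinarith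
      nlinarith [sq_nonneg u]
    have h5 : D * (u * (3 * s ^ 2)) ≤ α / 4 * u ^ 2 + 9 * D ^ 2 / α * s ^ 4 := by
      have e : α / 4 * u ^ 2 + 9 * D ^ 2 / α * s ^ 4 - D * (u * (3 * s ^ 2))
          = (α * u / 2 - 3 * D * s ^ 2) ^ 2 / α := by field_simp; ring
      have : 0 ≤ (α * u / 2 - 3 * D * s ^ 2) ^ 2 / α := by positivity
      linarith
    have h6 : 0 ≤ D * s ^ 4 := by positivity
    rw [hu2]
    nlinarith

lemma Z_pos (m : ℕ) (W α r : ℝ) (hr : 0 < r) : 0 < ∫ x in box m r, muR m W α x := by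
  have hbm : MeasurableSet (box m r) := (box_compact m _).measurableSet
  rw [setIntegral_pos_iff_support_of_nonneg_ae
    (Filter.Eventually.of_forall fun x => (muR_pos m W α x).le)
    (box_int m r _ (continuous_muR m W α))]
  have : Function.support (muR m W α) = Set.univ := by
    ext x; simp [(muR_pos m W α x).ne']
  rw [this, Set.univ_inter, box_eq, volume_pi_pi]
  simp only [Real.volume_Icc, sub_neg_eq_add, Finset.prod_const]
  exact ENNReal.pow_pos (ENNReal.ofReal_pos.mpr (by linarith)) _

/-- for a real polynomial `g(x) = ∑_{j=3}^{q} c_j x^j` (lowest degree ≥ 3),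
the average `⟨exp{−∑_{j=−n}^{n} g(x_j/W)}⟩₀` with real parameter `γ = α > 0` tends to `1`. -/
theorem avg_poly_tendsto_one (α θ κ : ℝ) (hα : 0 < α)
    (hθ : 0 < θ) (hθ1 : θ ≤ 1) (hκ : 0 < κ) (hκθ : κ < θ / 8)
    (q : ℕ) (c : ℕ → ℝ) :
    Filter.Tendsto (fun n : ℕ =>
        (∫ x in box (2*n+1) (dl θ κ n * Wn θ n),
            Real.exp (-(∑ j, ∑ i ∈ Finset.Icc 3 q, c i * (x j / Wn θ n)^i)) *
              muR (2*n+1) (Wn θ n) α x) /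
          (∫ x in box (2*n+1) (dl θ κ n * Wn θ n), muR (2*n+1) (Wn θ n) α x))
      Filter.atTop (nhds 1) := by
  obtain ⟨C, δ₀, hC, hδ₀, hδ₁, hg1, hg2⟩ := poly_bounds q c α hα
  set B := 48 * Real.exp ((1 + 3 / α) / 4) with hB
  have hB0 : 0 < B := by positivity
  have hN : Filter.Tendsto (fun n : ℕ => 2 * (n : ℝ) + 1) Filter.atTop Filter.atTop :=
    Filter.tendsto_atTop_add_const_right _ _
      (tendsto_natCast_atTop_atTop.const_mul_atTop (by norm_num))
  have hWt : Filter.Tendsto (fun n : ℕ => Wn θ n) Filter.atTop Filter.atTop :=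
    (tendsto_rpow_atTop (by linarith : 0 < (1 + θ) / 2)).comp hN
  have hδt : Filter.Tendsto (fun n : ℕ => dl θ κ n) Filter.atTop (nhds 0) :=
    (tendsto_rpow_neg_atTop hκ).comp hWt
  have hN0 : ∀ n : ℕ, (0:ℝ) < 2 * (n : ℝ) + 1 := fun n => by positivity
  have hWp : ∀ n, 0 < Wn θ n := fun n => Real.rpow_pos_of_pos (hN0 n) _
  have hWN : ∀ n : ℕ, Wn θ n ≤ ((2 * n + 1 : ℕ) : ℝ) := by
    intro n
    push_cast
    unfold Wn
    calc (2 * (n:ℝ) + 1) ^ ((1 + θ) / 2) ≤ (2 * (n:ℝ) + 1) ^ (1:ℝ) :=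
          Real.rpow_le_rpow_of_exponent_le (by linarith [Nat.cast_nonneg (α := ℝ) n]) (by linarith)
      _ = _ := Real.rpow_one _
  set ε : ℕ → ℝ := fun n => ((2 * n + 1 : ℕ) : ℝ) / (Wn θ n) ^ 2 with hε
  have hεt : Filter.Tendsto ε Filter.atTop (nhds 0) := by
    have := (tendsto_rpow_neg_atTop hθ).comp hN
    refine this.congr fun n => ?_
    simp only [hε, Function.comp, Wn]
    rw [← Real.rpow_natCast, ← Real.rpow_mul (hN0 n).le]
    push_cast
    rw [show (1 + θ) / 2 * 2 = 1 + θ by ring, Real.rpow_add (hN0 n), Real.rpow_neg (hN0 n).le,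
      Real.rpow_one]
    have := Real.rpow_pos_of_pos (hN0 n) θ
    have := hN0 n
    field_simp
  have lo : Filter.Tendsto (fun n => 1 - C * B * ε n) Filter.atTop (nhds 1) := by
    simpa using (hεt.const_mul (C * B)).const_sub 1
  have up0 : Filter.Tendsto (fun n => 1 - 2 * C * B * ε n) Filter.atTop (nhds 1) := by
    simpa using (hεt.const_mul (2 * C * B)).const_sub 1
  have up : Filter.Tendsto (fun n => (1 - 2 * C * B * ε n)⁻¹) Filter.atTop (nhds 1) := by
    simpa using up0.inv₀ one_ne_zero
  have ev1 : ∀ᶠ n in Filter.atTop, dl θ κ n < δ₀ := hδt.eventually (gt_mem_nhds hδ₀)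
  have ev2 : ∀ᶠ n in Filter.atTop, 0 < 1 - 2 * C * B * ε n := up0.eventually (lt_mem_nhds one_pos)
  have main : ∀ n, dl θ κ n < δ₀ → _ := fun n hn =>
    core (2 * n + 1) (Wn θ n) α (dl θ κ n) hα (hWp n) (hWN n) (hn.le.trans hδ₁)
      (fun s => ∑ i ∈ Finset.Icc 3 q, c i * s ^ i) (by fun_prop) C hC hg1
      (fun s t hs ht => hg2 s t (hs.trans hn.le) (ht.trans hn.le)) B hB
  have hZ : ∀ n, 0 < ∫ x in box (2*n+1) (dl θ κ n * Wn θ n), muR (2*n+1) (Wn θ n) α x :=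
    fun n => Z_pos _ _ _ _ (mul_pos (Real.rpow_pos_of_pos (hWp n) _) (hWp n))
  refine tendsto_of_tendsto_of_tendsto_of_le_of_le' lo up ?_ ?_
  · filter_upwards [ev1] with n hn
    rw [le_div_iff₀ (hZ n)]
    exact (main n hn).1
  · filter_upwards [ev1, ev2] with n hn hn2
    have h := (main n hn).2
    have hz := hZ n
    rw [div_le_iff₀ hz, inv_mul_eq_div, le_div_iff₀ hn2]
    refine le_of_mul_le_mul_left ?_ hz
    refine le_trans (le_of_eq ?_) (h.trans (le_of_eq (sq _)))
    simp only [hε]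
    ring
end

section
/- Let p≥1, t∈ℂ with t≠0, let C be a normal p×p complex matrix with distinct eigenvalues c₁,…,c_p (listed in some fixed order), and let D=diag(d₁,…,d_p) with distinct real numbers d₁,…,d_p. Then ∫_{U(p)} exp{t·Tr(C U* D U)} dμ(U) = (∏_{j=1}^{p−1} j!)·det[exp{t c_i d_j}]_{i,j=1}^{p} / (t^{p(p−1)/2}·Δ(c)·Δ(d)), where μ is the normalized Haar probability measure on the unitary group U(p), U* is the conjugate transpose of U, and Δ(c)=∏_{1≤i<j≤p}(c_j−c_i), Δ(d)=∏_{1≤i<j≤p}(d_j−d_i) are Vandermonde determinants. -/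
open MeasureTheory

/-- Borel σ-algebra on the space of complex matrices. -/
noncomputable instance (p : ℕ) : MeasurableSpace (Matrix (Fin p) (Fin p) ℂ) := borel _

instance (p : ℕ) : BorelSpace (Matrix (Fin p) (Fin p) ℂ) := ⟨rfl⟩

/-- The Vandermonde-type product `∏_{i<j}(v_j − v_i)`. -/
noncomputable def vandermonde (p : ℕ) (v : Fin p → ℂ) : ℂ :=
  ∏ ij ∈ Finset.univ.filter (fun ij : Fin p × Fin p => ij.1 < ij.2), (v ij.2 - v ij.1)



section AbstractRadial
variable {ι V : Type*} [DecidableEq ι] [CommRing V]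

/-- Abstract data: commuting-derivation ring with coordinates and inverse differences. -/
structure RadialData (D : ι → Derivation ℤ V V) (x : ι → V) (R : ι → ι → V)
    (dS : Finset ι → V → V) : Prop where
  comm : ∀ i j f, D i (D j f) = D j (D i f)
  dx : ∀ i j, D i (x j) = if i = j then 1 else 0
  inv : ∀ i j, i ≠ j → (x i - x j) * R i j = 1
  dS0 : ∀ h, dS ∅ h = h
  dSi : ∀ m S h, m ∉ S → dS (insert m S) h = D m (dS S h)

namespace RadialData
variable {D : ι → Derivation ℤ V V} {x : ι → V} {R : ι → ι → V} {dS : Finset ι → V → V}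

lemma anti (H : RadialData D x R dS) {i j : ι} (h : i ≠ j) : R j i = - R i j := by
  have h1 := H.inv i j h
  have h2 := H.inv j i h.symm
  linear_combination (R j i) * (-h1) - (R i j) * h2

lemma three (H : RadialData D x R dS) {i m l : ι} (h1 : i ≠ m) (h2 : i ≠ l) (h3 : l ≠ m) :
    R i m * R i l = R i m * R m l + R i l * R l m := by
  have e1 := H.inv i m h1
  have e2 := H.inv i l h2
  have e3 := H.inv l m h3
  rw [H.anti h3]
  linear_combination (- R i m * R i l) * e3 + R i l * R l m * e1 - R i m * R l m * e2

lemma dR (H : RadialData D x R dS) {i j : ι} (k : ι) (h : i ≠ j) :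
    D k (R i j) = ((if k = j then 1 else 0) - (if k = i then 1 else 0)) * (R i j * R i j) := by
  have e1 := H.inv i j h
  have e2 := congrArg (D k) e1
  rw [Derivation.leibniz, map_sub, H.dx, H.dx, Derivation.map_one_eq_zero] at e2
  simp only [smul_eq_mul] at e2
  linear_combination R i j * e2 - D k (R i j) * e1

lemma dS_comm (H : RadialData D x R dS) (m : ι) (S : Finset ι) (h : V) :
    D m (dS S h) = dS S (D m h) := by
  induction S using Finset.induction_on with
  | empty => simp [H.dS0]
  | insert a S ha ih => rw [H.dSi _ _ _ ha, H.dSi _ _ _ ha, H.comm, ih]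

lemma dS_const (H : RadialData D x R dS) (S : Finset ι) (a h : V) (ha : ∀ l ∈ S, D l a = 0) :
    dS S (a * h) = a * dS S h := by
  induction S using Finset.induction_on with
  | empty => simp [H.dS0]
  | insert m S hm ih =>
    rw [H.dSi _ _ _ hm, H.dSi _ _ _ hm, ih (fun l hl => ha l (Finset.mem_insert_of_mem hl)),
      Derivation.leibniz, ha m (Finset.mem_insert_self _ _)]
    simp

lemma d_prod (D : Derivation ℤ V V) {κ : Type*} (Q : Finset κ) (g s : κ → V)
    (h : ∀ q ∈ Q, D (g q) = g q * s q) : D (∏ q ∈ Q, g q) = (∏ q ∈ Q, g q) * ∑ q ∈ Q, s q := by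
  classical
  induction Q using Finset.induction_on with
  | empty => simp
  | insert m S hm ih =>
    rw [Finset.prod_insert hm, Finset.sum_insert hm, Derivation.leibniz,
      ih (fun q hq => h q (Finset.mem_insert_of_mem hq)), h m (Finset.mem_insert_self _ _)]
    simp only [smul_eq_mul]
    ring

/-- the conjugated operator `π ∂^S π⁻¹`. -/
def P (x : ι → V) (R : ι → ι → V) (dS : Finset ι → V → V) (i : ι) (S : Finset ι) (h : V) : V :=
  (∏ l ∈ S, (x i - x l)) * dS S ((∏ l ∈ S, R i l) * h)

lemma P_insert (H : RadialData D x R dS) {i m : ι} {S : Finset ι} (him : i ≠ m) (hm : m ∉ S)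
    (hi : i ∉ S) (h : V) :
    P x R dS i (insert m S) h = D m (P x R dS i S h) + R i m * P x R dS i S h := by
  unfold P
  rw [Finset.prod_insert hm, Finset.prod_insert hm, H.dSi _ _ _ hm, mul_assoc (R i m),
    H.dS_const S (R i m)]
  · rw [Derivation.leibniz, Derivation.leibniz, H.dR m him,
      d_prod (D m) S (fun l => x i - x l) (fun _ => 0)]
    · have e1 := H.inv i m him
      simp only [smul_eq_mul, Finset.sum_const_zero, if_neg him.symm, if_true]
      set q := dS S ((∏ l ∈ S, R i l) * h)
      linear_combination ((∏ l ∈ S, (x i - x l)) * (D m q + R i m * q)) * e1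
    · intro l hl
      have : m ≠ l := fun e => hm (e ▸ hl)
      simp [H.dx, this, him.symm]
  · intro l hl
    have h1 : l ≠ m := fun e => hm (e ▸ hl)
    have h2 : l ≠ i := fun e => hi (e ▸ hl)
    simp [H.dR l him, h1, h2]

lemma P_eq (H : RadialData D x R dS) (S : Finset ι) (h : V) : ∀ i, i ∉ S →
    P x R dS i S h = dS S h + ∑ l ∈ S, R i l * P x R dS l (S.erase l) h := by
  induction S using Finset.induction_on with
  | empty => intro i _; simp [P]
  | insert m S hm ih =>
    intro i hi
    rw [Finset.mem_insert, not_or] at hi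
    obtain ⟨him, hiS⟩ := hi
    rw [H.P_insert him hm hiS, Finset.sum_insert hm, Finset.erase_insert hm, H.dSi _ _ _ hm]
    have e : ∀ l ∈ S, R i l * P x R dS l ((insert m S).erase l) h =
        R i l * (D m (P x R dS l (S.erase l) h) + R l m * P x R dS l (S.erase l) h) := by
      intro l hl
      have hlm : l ≠ m := fun e => hm (e ▸ hl)
      rw [Finset.erase_insert_of_ne hlm.symm, H.P_insert hlm (by simp [hm]) (by simp)]
    rw [Finset.sum_congr rfl e, ih m hm, ih i hiS, map_add, map_sum]
    have e2 : ∀ l ∈ S, D m (R i l * P x R dS l (S.erase l) h) =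
        R i l * D m (P x R dS l (S.erase l) h) := by
      intro l hl
      have hlm : m ≠ l := fun e => hm (e ▸ hl)
      have hil : i ≠ l := fun e => hiS (e ▸ hl)
      rw [Derivation.leibniz, H.dR m hil]
      simp [hlm, Ne.symm him]
    rw [Finset.sum_congr rfl e2]
    simp only [mul_add, Finset.mul_sum, Finset.sum_add_distrib]
    have e3 : ∑ l ∈ S, R i m * (R i l * P x R dS l (S.erase l) h) =
       ∑ l ∈ S, R i m * (R m l * P x R dS l (S.erase l) h) +
       ∑ l ∈ S, R i l * (R l m * P x R dS l (S.erase l) h) := by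
      rw [← Finset.sum_add_distrib]
      refine Finset.sum_congr rfl fun l hl => ?_
      have hlm : l ≠ m := fun e => hm (e ▸ hl)
      have hil : i ≠ l := fun e => hiS (e ▸ hl)
      linear_combination (P x R dS l (S.erase l) h) * H.three him hil hlm
    rw [e3]; ring

lemma key (H : RadialData D x R dS) (I : Finset ι) (i : ι) (hi : i ∈ I) (G : V) :
    dS I G = D i (P x R dS i (I.erase i) G) -
      ∑ j ∈ I.erase i, R i j * P x R dS j (I.erase j) G := by
  rw [H.P_eq (I.erase i) G i (by simp), map_add, map_sum, ← H.dSi _ _ _ (by simp),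
    Finset.insert_erase hi]
  have : ∀ l ∈ I.erase i, D i (R i l * P x R dS l ((I.erase i).erase l) G) =
      R i l * P x R dS l (I.erase l) G := by
    intro l hl
    have hli : l ≠ i := (Finset.mem_erase.1 hl).1
    have e : I.erase l = insert i ((I.erase i).erase l) := by
      ext a; simp only [Finset.mem_erase, Finset.mem_insert]
      constructor
      · rintro ⟨h1, h2⟩; by_cases h : a = i
        · exact Or.inl h
        · exact Or.inr ⟨h1, h, h2⟩
      · rintro (rfl | ⟨h1, _, h2⟩)
        · exact ⟨hli.symm, hi⟩
        · exact ⟨h1, h2⟩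
    rw [e, H.P_insert hli (by simp) (by simp), Derivation.leibniz, H.dR i hli.symm, H.anti hli.symm]
    simp only [smul_eq_mul, if_neg hli.symm, if_true]
    ring
  rw [Finset.sum_congr rfl this]; ring

theorem main (H : RadialData D x R dS) (f : Finset ι → V)
    (hf : ∀ I : Finset ι, ∀ i ∈ I, f I = D i (f (I.erase i)) +
      ∑ j ∈ I.erase i, R i j * (f (I.erase i) - f (I.erase j))) (I : Finset ι) :
    ∀ v, (∀ i ∈ I, D i v = v * ∑ j ∈ I.erase i, R i j) → v * f I = dS I (v * f ∅) := by
  induction I using Finset.strongInduction with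
  | H I ih =>
  intro v hv
  rcases I.eq_empty_or_nonempty with rfl | ⟨i, hi⟩
  · rw [H.dS0]
  have step : ∀ i ∈ I, v * f (I.erase i) = P x R dS i (I.erase i) (v * f ∅) := by
    intro i hi
    have := ih (I.erase i) (Finset.erase_ssubset hi) ((∏ l ∈ I.erase i, R i l) * v) (by
      intro k hk
      obtain ⟨hki, hkI⟩ := Finset.mem_erase.1 hk
      rw [Derivation.leibniz, hv k hkI, d_prod (D k) (I.erase i) (fun l => R i l)
        (fun l => if k = l then R i k else 0)]
      · rw [Finset.sum_ite_eq, if_pos hk, ← Finset.sum_erase_add (I.erase k) _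
          (Finset.mem_erase.2 ⟨hki.symm, hi⟩), H.anti (Ne.symm hki), Finset.erase_right_comm]
        simp only [smul_eq_mul]
        ring
      · intro l hl
        have hil : i ≠ l := (Finset.mem_erase.1 hl).1.symm
        rw [H.dR k hil]
        by_cases hkl : k = l
        · subst hkl; simp [hki]
        · simp [hkl, hki])
    unfold P
    rw [← mul_assoc, ← this, ← mul_assoc, ← mul_assoc, ← Finset.prod_mul_distrib,
      Finset.prod_congr rfl (fun l hl => H.inv i l (Finset.mem_erase.1 hl).1.symm)]
    simp
  rw [H.key I i hi, ← step i hi, Derivation.leibniz, hv i hi, hf I i hi]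
  have : ∀ j ∈ I.erase i, R i j * P x R dS j (I.erase j) (v * f ∅) = 
     R i j * (v * f (I.erase j)) := fun j hj => by rw [step j (Finset.mem_erase.1 hj).2]
  rw [Finset.sum_congr rfl this]
  simp only [mul_sub, mul_add, Finset.sum_sub_distrib, smul_eq_mul]
  have e1 : ∑ j ∈ I.erase i, R i j * (v * f (I.erase j)) =
    v * ∑ j ∈ I.erase i, R i j * f (I.erase j) := by
    rw [Finset.mul_sum]; exact Finset.sum_congr rfl fun j _ => by ring
  rw [e1, ← Finset.sum_mul]
  ring
end RadialData
end AbstractRadial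


section Smooth
open scoped ContDiff
variable {p : ℕ}

/-- Smooth (holomorphic) functions on an open set of `ℂ^p`. -/
def SmoothFn (Ω : TopologicalSpace.Opens (Fin p → ℂ)) : Subalgebra ℂ (Ω → ℂ) where
  carrier := {f | ∃ g : (Fin p → ℂ) → ℂ, ContDiffOn ℂ ∞ g Ω ∧ ∀ x : Ω, f x = g x}
  mul_mem' := by
    rintro a b ⟨g, hg, hg'⟩ ⟨h, hh, hh'⟩
    exact ⟨fun x => g x * h x, hg.mul hh, fun x => by simp [hg', hh']⟩
  add_mem' := by
    rintro a b ⟨g, hg, hg'⟩ ⟨h, hh, hh'⟩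
    exact ⟨fun x => g x + h x, hg.add hh, fun x => by simp [hg', hh']⟩
  algebraMap_mem' := fun r => ⟨fun _ => r, contDiffOn_const, fun x => by simp⟩

namespace SmoothFn
variable {Ω : TopologicalSpace.Opens (Fin p → ℂ)}

/-- package a smooth function -/
def mk (g : (Fin p → ℂ) → ℂ) (hg : ContDiffOn ℂ ∞ g Ω) : SmoothFn Ω :=
  ⟨fun x => g x, g, hg, fun _ => rfl⟩

/-- representative -/
noncomputable def rep (f : SmoothFn Ω) : (Fin p → ℂ) → ℂ := f.2.choose
lemma rep_smooth (f : SmoothFn Ω) : ContDiffOn ℂ ∞ (rep f) Ω := f.2.choose_spec.1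
lemma rep_eq (f : SmoothFn Ω) (x : Ω) : f.1 x = (rep f) x := f.2.choose_spec.2 x

lemma fderiv_smooth {g : (Fin p → ℂ) → ℂ} (hg : ContDiffOn ℂ ∞ g Ω) (e : Fin p → ℂ) :
    ContDiffOn ℂ ∞ (fun x => fderiv ℂ g x e) Ω := by
  have := hg.fderiv_of_isOpen Ω.isOpen (m := ∞) (by simp)
  exact this.clm_apply contDiffOn_const

lemma differentiableAt {g : (Fin p → ℂ) → ℂ} (hg : ContDiffOn ℂ ∞ g Ω) (x : Ω) :
    DifferentiableAt ℂ g x :=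
  (hg.contDiffAt (Ω.isOpen.mem_nhds x.2)).differentiableAt (by simp)

/-- the partial derivative -/
noncomputable def dfun (i : Fin p) (f : SmoothFn Ω) : SmoothFn Ω :=
  mk (fun x => fderiv ℂ (rep f) x (Pi.single i 1)) (fderiv_smooth (rep_smooth f) _)

lemma dfun_eq (i : Fin p) (f : SmoothFn Ω) (g : (Fin p → ℂ) → ℂ)
    (h : ∀ x : Ω, f.1 x = g x) (x : Ω) :
    (dfun i f).1 x = fderiv ℂ g x (Pi.single i 1) := by
  have : (rep f) =ᶠ[nhds (x : Fin p → ℂ)] g := by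
    filter_upwards [Ω.isOpen.mem_nhds x.2] with y hy
    rw [← rep_eq f ⟨y, hy⟩, h ⟨y, hy⟩]
  show fderiv ℂ (rep f) x _ = _
  rw [this.fderiv_eq]

lemma dfun_mk (i : Fin p) (g : (Fin p → ℂ) → ℂ) (hg : ContDiffOn ℂ ∞ g Ω) :
    dfun i (mk g hg : SmoothFn Ω) =
      mk (fun x => fderiv ℂ g x (Pi.single i 1)) (fderiv_smooth hg _) := by
  apply Subtype.ext; funext x
  exact dfun_eq i _ g (fun _ => rfl) x

/-- as a derivation -/
noncomputable def D (i : Fin p) : Derivation ℂ (SmoothFn Ω) (SmoothFn Ω) where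
  toFun := dfun i
  map_add' := by
    intro a b
    apply Subtype.ext; funext x
    rw [dfun_eq i (a + b) ((rep a) + (rep b)) (fun x => by simp [← rep_eq])]
    rw [fderiv_add (differentiableAt (rep_smooth a) x) (differentiableAt (rep_smooth b) x)]
    rfl
  map_smul' := by
    intro r a
    apply Subtype.ext; funext x
    rw [dfun_eq i (r • a) (r • (rep a)) (fun x => by simp [← rep_eq])]
    rw [fderiv_const_smul (differentiableAt (rep_smooth a) x)]
    rfl
  map_one_eq_zero' := by
    apply Subtype.ext; funext x
    show (dfun i 1).1 x = _
    rw [dfun_eq i 1 (fun _ => 1) (fun _ => rfl)]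
    simp
  leibniz' := by
    intro a b
    apply Subtype.ext; funext x
    show (dfun i (a * b)).1 x = _
    rw [dfun_eq i (a * b) ((rep a) * (rep b)) (fun x => by simp [← rep_eq])]
    rw [fderiv_mul (differentiableAt (rep_smooth a) x) (differentiableAt (rep_smooth b) x)]
    simp only [← rep_eq]
    rfl

lemma D_eq (i : Fin p) (f : SmoothFn Ω) (g : (Fin p → ℂ) → ℂ)
    (h : ∀ x : Ω, f.1 x = g x) (x : Ω) :
    (D i f).1 x = fderiv ℂ g x (Pi.single i 1) := dfun_eq i f g h x

lemma D_comm (i j : Fin p) (f : SmoothFn Ω) : D i (D j f) = D j (D i f) := by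
  apply Subtype.ext; funext x
  have key : ∀ i j : Fin p, (D i (D j f)).1 x =
      fderiv ℂ (fderiv ℂ (rep f)) x (Pi.single i 1) (Pi.single j 1) := by
    intro i j
    rw [D_eq i (D j f) (fun x => fderiv ℂ (rep f) x (Pi.single j 1))
      (fun y => D_eq j f (rep f) (rep_eq f) y)]
    have hd : DifferentiableAt ℂ (fderiv ℂ (rep f)) x :=
      (((rep_smooth f).fderiv_of_isOpen Ω.isOpen (m := ∞) (by simp)).contDiffAt
        (Ω.isOpen.mem_nhds x.2)).differentiableAt (by simp)
    rw [fderiv_clm_apply hd (differentiableAt_const _)]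
    simp
  rw [key, key]
  have := ((rep_smooth f).contDiffAt (Ω.isOpen.mem_nhds x.2)).isSymmSndFDerivAt
    (by simp only [minSmoothness_of_isRCLikeNormedField]; exact (WithTop.coe_le_coe.2 (le_top : (2 : ℕ∞) ≤ ⊤)))
  exact this _ _

/-- restriction -/
lemma res_mem (f : SmoothFn (⊤ : TopologicalSpace.Opens (Fin p → ℂ))) :
    ContDiffOn ℂ ∞ (rep f) Ω := (rep_smooth f).mono (fun _ _ => trivial)

/-- restriction from the whole space -/
noncomputable def res (Ω : TopologicalSpace.Opens (Fin p → ℂ))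
    (f : SmoothFn (⊤ : TopologicalSpace.Opens (Fin p → ℂ))) : SmoothFn Ω :=
  mk (rep f) (res_mem f)

lemma res_apply (f : SmoothFn (⊤ : TopologicalSpace.Opens (Fin p → ℂ))) (x : Ω) :
    (res Ω f).1 x = f.1 ⟨x, trivial⟩ := by
  exact (rep_eq f ⟨x, trivial⟩).symm

lemma D_res (i : Fin p) (f : SmoothFn (⊤ : TopologicalSpace.Opens (Fin p → ℂ))) :
    D i (res Ω f) = res Ω (D i f) := by
  apply Subtype.ext; funext x
  rw [res_apply, D_eq i _ (rep f) (rep_eq f), D_eq i _ (rep f) (fun _ => rfl)]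

lemma continuous_top (f : SmoothFn (⊤ : TopologicalSpace.Opens (Fin p → ℂ))) :
    Continuous (fun x => f.1 ⟨x, trivial⟩) := by
  have : (fun x => f.1 ⟨x, trivial⟩) = (rep f) := by funext x; exact rep_eq f ⟨x, trivial⟩
  rw [this]
  exact continuousOn_univ.1 (rep_smooth f).continuousOn

end SmoothFn

open scoped IsMulCommutative in
/-- polynomial functional calculus for commuting endomorphisms -/
lemma exists_aeval_End {W : Type*} [AddCommGroup W] [Module ℂ W] (T : Fin p → Module.End ℂ W)
    (hT : ∀ i j, T i * T j = T j * T i) :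
    ∃ φ : MvPolynomial (Fin p) ℂ →ₐ[ℂ] Module.End ℂ W, ∀ i, φ (MvPolynomial.X i) = T i := by
  have : IsMulCommutative (Algebra.adjoin ℂ (Set.range T)) := Algebra.isMulCommutative_adjoin ℂ (by
    rintro _ ⟨i, rfl⟩ _ ⟨j, rfl⟩; exact hT i j)
  let ψ : MvPolynomial (Fin p) ℂ →ₐ[ℂ] Algebra.adjoin ℂ (Set.range T) :=
    MvPolynomial.aeval (fun i => ⟨T i, Algebra.subset_adjoin ⟨i, rfl⟩⟩)
  refine ⟨(Algebra.adjoin ℂ (Set.range T)).val.comp ψ, fun i => ?_⟩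
  simp [ψ]
end Smooth


section Uniq
open scoped ContDiff
variable {p : ℕ}

/-- the whole space -/
noncomputable abbrev TopO (p : ℕ) : TopologicalSpace.Opens (Fin p → ℂ) := ⊤

open MvPolynomial in
lemma uniq_ode (φ : MvPolynomial (Fin p) ℂ →ₐ[ℂ] Module.End ℂ (SmoothFn (TopO p)))
    (d : Fin p → ℂ) (G : SmoothFn (TopO p))
    (hG : ∀ z : ℂ, φ (∏ i, (X i - C z)) G = (∏ a, (d a - z)) • G) (i : Fin p) :
    φ (∏ a, (X i - C (d a))) G = 0 := by
  let q : Polynomial (MvPolynomial (Fin p) ℂ) :=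
    ∏ i, (Polynomial.C (X i) - Polynomial.X) - ∏ a, (Polynomial.C (C (d a)) - Polynomial.X)
  have hq1 : ∀ r : MvPolynomial (Fin p) ℂ, q.eval r = ∏ i, (X i - r) - ∏ a, (C (d a) - r) := by
    intro r
    simp [q, Polynomial.eval_prod]
  have hq2 : ∀ z : ℂ, φ (q.eval (C z)) G = 0 := by
    intro z
    rw [hq1, map_sub, LinearMap.sub_apply, hG]
    have : (∏ a, (C (d a) - C z) : MvPolynomial (Fin p) ℂ) = algebraMap ℂ _ (∏ a, (d a - z)) := by
      rw [map_prod]; simp [MvPolynomial.algebraMap_eq]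
    rw [this, AlgHom.commutes, Module.algebraMap_end_apply, sub_self]
  have hq3 : ∀ k, φ (q.coeff k) G = 0 := by
    intro k
    apply Subtype.ext; funext x
    let Q : Polynomial ℂ := ∑ k ∈ Finset.range (q.natDegree + 1),
      Polynomial.C ((φ (q.coeff k) G).1 x) * Polynomial.X ^ k
    have hQ : Q = 0 := by
      apply Polynomial.funext
      intro z
      have h1 := congrArg (fun f : SmoothFn (TopO p) => f.1 x) (hq2 z)
      simp only [Polynomial.eval_eq_sum_range, map_sum, map_mul] at h1
      simp only [Q, Polynomial.eval_finsetSum, Polynomial.eval_mul, Polynomial.eval_C,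
        Polynomial.eval_pow, Polynomial.eval_X, Polynomial.eval_zero]
      have h2 : ∀ k, φ (C z ^ k) = algebraMap ℂ _ (z ^ k) := by
        intro k
        rw [← map_pow, ← MvPolynomial.algebraMap_eq, AlgHom.commutes]
      have h3 : (∑ k ∈ Finset.range (q.natDegree + 1), (φ (q.coeff k) * φ (C z ^ k))) G =
         ∑ k ∈ Finset.range (q.natDegree + 1), (z ^ k) • φ (q.coeff k) G := by
        rw [LinearMap.sum_apply]
        refine Finset.sum_congr rfl fun k _ => ?_
        rw [h2, Module.End.mul_apply, Module.algebraMap_end_apply, map_smul]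
      rw [h3] at h1
      have h4 : ((0 : SmoothFn (TopO p))).1 x = 0 := rfl
      rw [h4] at h1
      rw [← h1, AddSubmonoidClass.coe_finsetSum, Finset.sum_apply]
      refine Finset.sum_congr rfl fun k _ => ?_
      show _ = z ^ k * _
      rw [mul_comm]
    have hc := congrArg (fun Q : Polynomial ℂ => Q.coeff k) hQ
    simp only [Q, Polynomial.finsetSum_coeff, Polynomial.coeff_C_mul, Polynomial.coeff_X_pow,
      Polynomial.coeff_zero] at hc
    by_cases hk : k ∈ Finset.range (q.natDegree + 1)
    · simpa [Finset.sum_ite_eq, hk, -Finset.mem_range] using hc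
    · have : q.coeff k = 0 := Polynomial.coeff_eq_zero_of_natDegree_lt (by simpa using hk)
      rw [this, map_zero]; rfl
  have h5 : φ (q.eval (X i)) G = 0 := by
    rw [Polynomial.eval_eq_sum_range, map_sum, LinearMap.sum_apply]
    refine Finset.sum_eq_zero fun k _ => ?_
    rw [mul_comm, map_mul, Module.End.mul_apply, hq3, map_zero]
  rw [hq1, Finset.prod_eq_zero (Finset.mem_univ i) (sub_self _), zero_sub, map_neg,
    LinearMap.neg_apply, neg_eq_zero] at h5
  have h6 : (∏ a, (X i - C (d a)) : MvPolynomial (Fin p) ℂ) =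
      C ((-1 : ℂ) ^ p) * ∏ a, (C (d a) - X i) := by
    have : ∀ a ∈ Finset.univ, (X i - C (d a) : MvPolynomial (Fin p) ℂ) =
      (-1) * (C (d a) - X i) := fun a _ => by ring
    rw [Finset.prod_congr rfl this, Finset.prod_mul_distrib]
    simp
  rw [h6, map_mul, Module.End.mul_apply, h5, map_zero]

lemma exp_sol (K : SmoothFn (TopO p)) (e : Fin p → ℂ)
    (hK : ∀ i, SmoothFn.D i K = e i • K) (c : Fin p → ℂ) :
    K.1 ⟨c, trivial⟩ = K.1 ⟨0, trivial⟩ * Complex.exp (∑ i, c i * e i) := by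
  let g : (Fin p → ℂ) → ℂ := fun c => SmoothFn.rep K c * Complex.exp (-∑ i, c i * e i)
  have hd : ∀ c, DifferentiableAt ℂ (SmoothFn.rep K) c := fun c =>
    SmoothFn.differentiableAt (SmoothFn.rep_smooth K) ⟨c, trivial⟩
  have hL : ∀ c : Fin p → ℂ, HasFDerivAt (fun c : Fin p → ℂ => -∑ i, c i * e i)
      (-∑ i, (e i) • (ContinuousLinearMap.proj i : (Fin p → ℂ) →L[ℂ] ℂ)) c := by
    intro c
    apply HasFDerivAt.neg
    apply HasFDerivAt.fun_sum
    intro i _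
    exact ((ContinuousLinearMap.proj i : (Fin p → ℂ) →L[ℂ] ℂ).hasFDerivAt).mul_const (e i)
  have hg : ∀ c, HasFDerivAt g (0 : (Fin p → ℂ) →L[ℂ] ℂ) c := by
    intro c
    have h1 := (hd c).hasFDerivAt.mul (hL c).cexp
    refine h1.congr_fderiv ?_
    apply ContinuousLinearMap.coe_injective
    apply LinearMap.pi_ext'
    intro i
    ext
    have h2 : fderiv ℂ (SmoothFn.rep K) c (Pi.single i 1) = e i * SmoothFn.rep K c := by
      have : (SmoothFn.D i K).1 ⟨c, trivial⟩ = (e i • K).1 ⟨c, trivial⟩ := by rw [hK i]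
      rw [SmoothFn.D_eq i K _ (SmoothFn.rep_eq K)] at this
      rw [this]
      show e i * K.1 _ = _
      rw [SmoothFn.rep_eq]
    simp [h2, Pi.single_apply]
    ring
  have hconst := is_const_of_fderiv_eq_zero (fun c => (hg c).differentiableAt)
    (fun c => (hg c).fderiv) c 0
  simp only [g, Pi.zero_apply, zero_mul, Finset.sum_const_zero, neg_zero, Complex.exp_zero,
    mul_one] at hconst
  rw [SmoothFn.rep_eq, SmoothFn.rep_eq]
  show SmoothFn.rep K c = SmoothFn.rep K 0 * _
  rw [← hconst, mul_assoc, ← Complex.exp_add]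
  simp

open MvPolynomial in
theorem uniq_exp (φ : MvPolynomial (Fin p) ℂ →ₐ[ℂ] Module.End ℂ (SmoothFn (TopO p)))
    (hφ : ∀ i f, φ (X i) f = SmoothFn.D i f)
    (d : Fin p → ℂ) (hd : Function.Injective d) (hp : 1 ≤ p) (G : SmoothFn (TopO p))
    (hG : ∀ z : ℂ, φ (∏ i, (X i - C z)) G = (∏ a, (d a - z)) • G) :
    ∃ K : (Fin p → Fin p) → ℂ, ∀ c : Fin p → ℂ,
      G.1 ⟨c, trivial⟩ = ∑ a, K a * Complex.exp (∑ i, c i * d (a i)) := by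
  let L : Fin p → Fin p → MvPolynomial (Fin p) ℂ := fun i a =>
    Polynomial.aeval (X i) (Lagrange.basis Finset.univ d a)
  have hL1 : ∀ i, ∑ a, L i a = 1 := by
    intro i
    have : Nonempty (Fin p) := ⟨⟨0, hp⟩⟩
    simp only [L]
    rw [← map_sum, Lagrange.sum_basis hd.injOn Finset.univ_nonempty, map_one]
  have hL2 : ∀ i a, ∃ r, (X i - C (d a)) * L i a = r * ∏ b, (X i - C (d b)) := by
    intro i a
    refine ⟨∏ b ∈ Finset.univ.erase a, C (d a - d b)⁻¹, ?_⟩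
    rw [← Finset.mul_prod_erase Finset.univ (fun b => (X i - C (d b))) (Finset.mem_univ a)]
    simp only [L, Lagrange.basis, Lagrange.basisDivisor, map_prod, map_mul, map_sub,
      Polynomial.aeval_C, Polynomial.aeval_X, Finset.prod_mul_distrib, MvPolynomial.algebraMap_eq]
    ring
  let T : (Fin p → Fin p) → SmoothFn (TopO p) := fun a => φ (∏ i, L i (a i)) G
  have hT : ∀ a i, SmoothFn.D i (T a) = d (a i) • T a := by
    intro a i
    obtain ⟨r, hr⟩ := hL2 i (a i)
    have h0 : φ ((X i - C (d (a i))) * ∏ i, L i (a i)) G = 0 := by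
      rw [← Finset.mul_prod_erase Finset.univ (fun i => L i (a i)) (Finset.mem_univ i),
        ← mul_assoc, hr, mul_comm r, mul_assoc, mul_comm, map_mul, Module.End.mul_apply,
        uniq_ode φ d G hG, map_zero]
    rw [map_mul, Module.End.mul_apply, map_sub, LinearMap.sub_apply, hφ, sub_eq_zero,
      ← MvPolynomial.algebraMap_eq, AlgHom.commutes, Module.algebraMap_end_apply] at h0
    exact h0
  refine ⟨fun a => (T a).1 ⟨0, trivial⟩, fun c => ?_⟩
  have hsum : G = ∑ a, T a := by
    have : (1 : MvPolynomial (Fin p) ℂ) = ∑ a : Fin p → Fin p, ∏ i, L i (a i) := by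
      rw [← Fintype.prod_sum]
      simp [hL1]
    calc G = φ 1 G := by simp
    _ = _ := by rw [this, map_sum, LinearMap.sum_apply]
  conv_lhs => rw [hsum]
  rw [AddSubmonoidClass.coe_finsetSum, Finset.sum_apply]
  exact Finset.sum_congr rfl fun a _ => exp_sol (T a) (fun i => d (a i)) (hT a) c

end Uniq


section Unitary
variable {p : ℕ}

lemma compactSpace_unitaryGroup (p : ℕ) : CompactSpace (Matrix.unitaryGroup (Fin p) ℂ) := by
  refine (isCompact_iff_compactSpace (s := (Matrix.unitaryGroup (Fin p) ℂ : Set (Matrix (Fin p) (Fin p) ℂ)))).1 ?_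
  have hsub : (Matrix.unitaryGroup (Fin p) ℂ : Set (Matrix (Fin p) (Fin p) ℂ)) ⊆
      Set.pi Set.univ (fun _ : Fin p => Set.pi Set.univ
        (fun _ : Fin p => Metric.closedBall (0 : ℂ) 1)) := by
    intro U hU i _ j _
    rw [mem_closedBall_zero_iff]
    exact entry_norm_bound_of_unitary hU i j
  have hcpt : IsCompact (Set.pi Set.univ (fun _ : Fin p => Set.pi Set.univ
        (fun _ : Fin p => Metric.closedBall (0 : ℂ) 1))) :=
    isCompact_univ_pi fun _ => isCompact_univ_pi fun _ => isCompact_closedBall _ _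
  have hclosed : IsClosed (Matrix.unitaryGroup (Fin p) ℂ : Set (Matrix (Fin p) (Fin p) ℂ)) := by
    have : (Matrix.unitaryGroup (Fin p) ℂ : Set (Matrix (Fin p) (Fin p) ℂ)) =
      {U | star U * U = 1} := by
      ext U; exact Matrix.mem_unitaryGroup_iff'
    rw [this]
    exact isClosed_eq (by fun_prop) continuous_const
  exact hcpt.of_isClosed_subset hclosed hsub

lemma integral_right_mul (μ : Measure (Matrix.unitaryGroup (Fin p) ℂ))
    [μ.IsHaarMeasure] [IsProbabilityMeasure μ] (V : Matrix.unitaryGroup (Fin p) ℂ)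
    (f : Matrix.unitaryGroup (Fin p) ℂ → ℂ) :
    ∫ U, f (U * V) ∂μ = ∫ U, f U ∂μ := by
  have := compactSpace_unitaryGroup p
  have h1 : (μ.map (· * V)).IsHaarMeasure := by infer_instance
  have h2 : IsProbabilityMeasure (μ.map (· * V)) :=
    Measure.isProbabilityMeasure_map (by fun_prop)
  have h3 : μ.map (· * V) = μ := Measure.isHaarMeasure_eq_of_isProbabilityMeasure _ _
  conv_rhs => rw [← h3]
  exact ((MeasurableEquiv.mulRight V).measurableEmbedding.integral_map f).symm

lemma integrable_of_cont (μ : Measure (Matrix.unitaryGroup (Fin p) ℂ)) [IsProbabilityMeasure μ]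
    {f : Matrix.unitaryGroup (Fin p) ℂ → ℂ} (hf : Continuous f) : Integrable f μ := by
  have := compactSpace_unitaryGroup p
  exact hf.integrable_of_hasCompactSupport (HasCompactSupport.of_compactSpace f)

lemma bound_of_cont {f : Matrix.unitaryGroup (Fin p) ℂ → ℂ} (hf : Continuous f) :
    ∃ K : ℝ, ∀ U, ‖f U‖ ≤ K := by
  have := compactSpace_unitaryGroup p
  obtain ⟨K, hK⟩ := isCompact_univ.exists_bound_of_continuousOn hf.continuousOn
  exact ⟨K, fun U => hK U trivial⟩

lemma integral_deriv_zero (μ : Measure (Matrix.unitaryGroup (Fin p) ℂ))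
    [μ.IsHaarMeasure] [IsProbabilityMeasure μ] (V : ℝ → Matrix.unitaryGroup (Fin p) ℂ)
    (hV : ∀ s t, V (s + t) = V s * V t)
    {f f' : Matrix.unitaryGroup (Fin p) ℂ → ℂ} (hf : Continuous f) (hf' : Continuous f')
    (h : ∀ U, HasDerivAt (fun s => f (U * V s)) (f' U) 0) : ∫ U, f' U ∂μ = 0 := by
  obtain ⟨K, hK⟩ := bound_of_cont hf'
  have hd : ∀ U s, HasDerivAt (fun s => f (U * V s)) (f' (U * V s)) s := by
    intro U s
    have h1 := h (U * V s)
    have h2 : (fun r => f (U * V r)) = fun r => (fun t => f (U * V s * V t)) (r - s) := by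
      funext r
      simp only
      rw [mul_assoc, ← hV]; simp
    rw [h2]
    have h3 := HasDerivAt.comp_sub_const (f := fun t => f (U * V s * V t)) (f' := f' (U * V s)) s s
      (by simpa using h1)
    exact h3
  have hm : ∀ s, Continuous (fun U => f (U * V s)) := fun s => by fun_prop
  have key := (hasDerivAt_integral_of_dominated_loc_of_deriv_le (μ := μ) (x₀ := (0 : ℝ))
    (F := fun s U => f (U * V s)) (F' := fun s U => f' (U * V s)) (s := Set.univ)
    (bound := fun _ => K) Filter.univ_mem
    (Filter.Eventually.of_forall fun s => (hm s).aestronglyMeasurable)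
    (integrable_of_cont μ (hm 0))
    (Continuous.aestronglyMeasurable (by fun_prop))
    (Filter.Eventually.of_forall fun U s _ => hK _)
    (integrable_const _)
    (Filter.Eventually.of_forall fun U s _ => hd U s)).2
  simp only [integral_right_mul μ] at key
  exact key.unique (hasDerivAt_const _ _)

section oneparam
open scoped Matrix.Norms.Operator

lemma hasDerivAt_exp_entry (X : Matrix (Fin p) (Fin p) ℂ) (i j : Fin p) :
    HasDerivAt (fun s : ℝ => (NormedSpace.exp (s • X)) i j) (X i j) 0 := by
  let i1 : NormedAlgebra ℝ (Matrix (Fin p) (Fin p) ℂ) := NormedAlgebra.restrictScalars ℝ ℂ _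
  have h := hasDerivAt_exp_smul_const (𝕂 := ℝ) X (0 : ℝ)
  rw [zero_smul, NormedSpace.exp_zero, one_mul] at h
  have h2 := ((Matrix.entryLinearMap ℝ ℂ i j).toContinuousLinearMap).hasFDerivAt.comp_hasDerivAt
    (0 : ℝ) h
  exact h2
end oneparam

lemma exists_oneparam (X : Matrix (Fin p) (Fin p) ℂ) (hX : star X = -X) :
    ∃ V : ℝ → Matrix.unitaryGroup (Fin p) ℂ, V 0 = 1 ∧ (∀ s t, V (s + t) = V s * V t) ∧
      (∀ i j, HasDerivAt (fun s => (V s).1 i j) (X i j) 0) ∧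
      (∀ Q, Commute Q X → ∀ s, Commute Q (V s).1) := by
  have hadd : ∀ s t : ℝ, NormedSpace.exp ((s + t) • X) =
      NormedSpace.exp (s • X) * NormedSpace.exp (t • X) := by
    intro s t
    rw [add_smul, Matrix.exp_add_of_commute]
    exact ((Commute.refl X).smul_left s).smul_right t
  have hstar : ∀ s : ℝ, star (NormedSpace.exp (s • X)) = NormedSpace.exp ((-s) • X) := by
    intro s
    have h := (Matrix.exp_conjTranspose (s • X)).symm
    rw [← Matrix.star_eq_conjTranspose, ← Matrix.star_eq_conjTranspose, star_smul, hX] at h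
    rw [h]; simp
  have hmem : ∀ s : ℝ, NormedSpace.exp (s • X) ∈ Matrix.unitaryGroup (Fin p) ℂ := by
    intro s
    rw [Matrix.mem_unitaryGroup_iff, hstar, ← hadd]; simp
  refine ⟨fun s => ⟨NormedSpace.exp (s • X), hmem s⟩, ?_, ?_, ?_, ?_⟩
  · apply Subtype.ext; simp
  · intro s t
    apply Subtype.ext
    exact hadd s t
  · intro i j
    exact hasDerivAt_exp_entry X i j
  · intro Q hQ s
    exact (hQ.smul_right s).exp_right

end Unitary


section Avg
open scoped ContDiff
variable {p : ℕ}

/-- the conjugated matrix `U* D U` -/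
noncomputable def Bm (d : Fin p → ℂ) (U : Matrix.unitaryGroup (Fin p) ℂ) :
    Matrix (Fin p) (Fin p) ℂ := star U.1 * Matrix.diagonal d * U.1

/-- the exponent -/
noncomputable def expo (d : Fin p → ℂ) (c : Fin p → ℂ) (U : Matrix.unitaryGroup (Fin p) ℂ) : ℂ :=
  ∑ i, c i * Bm d U i i

/-- averages against the exponential weight -/
noncomputable def avg (μ : Measure (Matrix.unitaryGroup (Fin p) ℂ)) (d : Fin p → ℂ)
    (φ : Matrix.unitaryGroup (Fin p) ℂ → ℂ) (c : Fin p → ℂ) : ℂ :=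
  ∫ U, φ U * Complex.exp (expo d c U) ∂μ

@[fun_prop]
lemma continuous_Bm (d : Fin p → ℂ) : Continuous (Bm d) := by
  unfold Bm; fun_prop

@[fun_prop]
lemma continuous_Bm_entry (d : Fin p → ℂ) (i j : Fin p) : Continuous (fun U => Bm d U i j) :=
  (continuous_Bm d).matrix_elem i j

@[fun_prop]
lemma continuous_expo (d c : Fin p → ℂ) : Continuous (expo d c) := by
  unfold expo; fun_prop

lemma continuous_expo2 (d : Fin p → ℂ) :
    Continuous (fun x : (Fin p → ℂ) × Matrix.unitaryGroup (Fin p) ℂ => expo d x.1 x.2) := by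
  unfold expo
  refine continuous_finsetSum _ fun i _ => ?_
  exact ((continuous_apply i).comp continuous_fst).mul
    ((continuous_Bm_entry d i i).comp continuous_snd)

lemma avg_add (μ : Measure (Matrix.unitaryGroup (Fin p) ℂ)) [IsProbabilityMeasure μ]
    (d c : Fin p → ℂ) {φ ψ : Matrix.unitaryGroup (Fin p) ℂ → ℂ} (hφ : Continuous φ)
    (hψ : Continuous ψ) : avg μ d (fun U => φ U + ψ U) c = avg μ d φ c + avg μ d ψ c := by
  unfold avg
  rw [← integral_add (integrable_of_cont μ (by fun_prop)) (integrable_of_cont μ (by fun_prop))]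
  congr 1; funext U; ring

lemma avg_sub (μ : Measure (Matrix.unitaryGroup (Fin p) ℂ)) [IsProbabilityMeasure μ]
    (d c : Fin p → ℂ) {φ ψ : Matrix.unitaryGroup (Fin p) ℂ → ℂ} (hφ : Continuous φ)
    (hψ : Continuous ψ) : avg μ d (fun U => φ U - ψ U) c = avg μ d φ c - avg μ d ψ c := by
  unfold avg
  rw [← integral_sub (integrable_of_cont μ (by fun_prop)) (integrable_of_cont μ (by fun_prop))]
  congr 1; funext U; ring

lemma avg_smul (μ : Measure (Matrix.unitaryGroup (Fin p) ℂ))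
    (d c : Fin p → ℂ) (φ : Matrix.unitaryGroup (Fin p) ℂ → ℂ) (a : ℂ) :
    avg μ d (fun U => a * φ U) c = a * avg μ d φ c := by
  unfold avg
  rw [← integral_const_mul]
  congr 1; funext U; ring

lemma avg_sum (μ : Measure (Matrix.unitaryGroup (Fin p) ℂ)) [IsProbabilityMeasure μ]
    (d c : Fin p → ℂ) {κ : Type*} (S : Finset κ) {φ : κ → Matrix.unitaryGroup (Fin p) ℂ → ℂ}
    (hφ : ∀ k, Continuous (φ k)) :
    avg μ d (fun U => ∑ k ∈ S, φ k U) c = ∑ k ∈ S, avg μ d (φ k) c := by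
  unfold avg
  rw [← integral_finsetSum _ (fun k _ => integrable_of_cont μ
    (by have := hφ k; fun_prop))]
  congr 1; funext U; rw [Finset.sum_mul]

lemma weight_hasFDerivAt (d : Fin p → ℂ) (φ : Matrix.unitaryGroup (Fin p) ℂ → ℂ)
    (U : Matrix.unitaryGroup (Fin p) ℂ) (c : Fin p → ℂ) :
    HasFDerivAt (fun c => φ U * Complex.exp (expo d c U))
      (∑ i, (φ U * Bm d U i i * Complex.exp (expo d c U)) •
      (ContinuousLinearMap.proj i : (Fin p → ℂ) →L[ℂ] ℂ)) c := by
  have h1 : HasFDerivAt (fun c => expo d c U)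
      (∑ i, Bm d U i i • (ContinuousLinearMap.proj i : (Fin p → ℂ) →L[ℂ] ℂ)) c := by
    unfold expo
    refine HasFDerivAt.fun_sum fun i _ => ?_
    exact (hasFDerivAt_apply i c).mul_const (Bm d U i i)
  have h2 := (h1.cexp).const_mul (φ U)
  refine h2.congr_fderiv ?_
  ext v
  simp [Finset.mul_sum]
  refine Finset.sum_congr rfl fun i _ => ?_
  ring

lemma weight_deriv_cont (d : Fin p → ℂ) {φ : Matrix.unitaryGroup (Fin p) ℂ → ℂ}
    (hφ : Continuous φ) :
    Continuous (fun x : (Fin p → ℂ) × Matrix.unitaryGroup (Fin p) ℂ =>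
      ∑ i, (φ x.2 * Bm d x.2 i i * Complex.exp (expo d x.1 x.2)) •
      (ContinuousLinearMap.proj i : (Fin p → ℂ) →L[ℂ] ℂ)) := by
  refine continuous_finsetSum _ fun i _ => ?_
  have h : Continuous (fun x : (Fin p → ℂ) × Matrix.unitaryGroup (Fin p) ℂ =>
      φ x.2 * Bm d x.2 i i * Complex.exp (expo d x.1 x.2)) :=
    ((hφ.comp continuous_snd).mul ((continuous_Bm_entry d i i).comp continuous_snd)).mul
      (Complex.continuous_exp.comp (continuous_expo2 d))
  exact h.smul continuous_const

lemma avg_hasFDerivAt (μ : Measure (Matrix.unitaryGroup (Fin p) ℂ)) [IsProbabilityMeasure μ]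
    (d : Fin p → ℂ) {φ : Matrix.unitaryGroup (Fin p) ℂ → ℂ} (hφ : Continuous φ)
    (c₀ : Fin p → ℂ) :
    HasFDerivAt (avg μ d φ)
      (∑ i, avg μ d (fun U => φ U * Bm d U i i) c₀ •
        (ContinuousLinearMap.proj i : (Fin p → ℂ) →L[ℂ] ℂ)) c₀ := by
  have hcs := compactSpace_unitaryGroup p
  obtain ⟨F', hF'⟩ : ∃ F' : (Fin p → ℂ) → Matrix.unitaryGroup (Fin p) ℂ →
      ((Fin p → ℂ) →L[ℂ] ℂ), ∀ c U, F' c U =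
    ∑ i, (φ U * Bm d U i i * Complex.exp (expo d c U)) •
      (ContinuousLinearMap.proj i : (Fin p → ℂ) →L[ℂ] ℂ) := ⟨_, fun _ _ => rfl⟩
  have hF'c : Continuous (fun x : (Fin p → ℂ) × Matrix.unitaryGroup (Fin p) ℂ => F' x.1 x.2) := by
    simp only [hF']
    exact weight_deriv_cont d hφ
  have hK : IsCompact (Metric.closedBall c₀ 1 ×ˢ
      (Set.univ : Set (Matrix.unitaryGroup (Fin p) ℂ))) :=
    (isCompact_closedBall c₀ 1).prod isCompact_univ
  obtain ⟨K, hK⟩ := hK.exists_bound_of_continuousOn hF'c.continuousOn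
  have key := hasFDerivAt_integral_of_dominated_of_fderiv_le (𝕜 := ℂ) (μ := μ) (x₀ := c₀)
    (F := fun c U => φ U * Complex.exp (expo d c U)) (F' := F') (s := Metric.ball c₀ 1)
    (bound := fun _ => K) (Metric.ball_mem_nhds c₀ one_pos)
    (Filter.Eventually.of_forall fun c => Continuous.aestronglyMeasurable (by fun_prop))
    (integrable_of_cont μ (by fun_prop))
    (Continuous.aestronglyMeasurable (hF'c.comp (Continuous.prodMk_right c₀)))
    (Filter.Eventually.of_forall fun U c hc =>
      hK (c, U) ⟨Metric.ball_subset_closedBall hc, trivial⟩)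
    (integrable_const _)
    (Filter.Eventually.of_forall fun U c _ => by rw [hF']; exact weight_hasFDerivAt d φ U c)
  refine key.congr_fderiv ?_
  simp only [hF']
  rw [integral_finsetSum]
  · refine Finset.sum_congr rfl fun i _ => ?_
    rw [integral_smul_const, avg]
  · intro i _
    exact (integrable_of_cont μ (by fun_prop)).smul_const _

lemma avg_contDiff (μ : Measure (Matrix.unitaryGroup (Fin p) ℂ)) [IsProbabilityMeasure μ]
    (d : Fin p → ℂ) {φ : Matrix.unitaryGroup (Fin p) ℂ → ℂ} (hφ : Continuous φ) :
    ContDiff ℂ ∞ (avg μ d φ) := by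
  rw [contDiff_infty]
  intro n
  induction n generalizing φ with
  | zero =>
    have : Differentiable ℂ (avg μ d φ) := fun c => (avg_hasFDerivAt μ d hφ c).differentiableAt
    exact contDiff_zero.2 this.continuous
  | succ n ih =>
    have h : ((n + 1 : ℕ) : WithTop ℕ∞) = (n : WithTop ℕ∞) + 1 := by push_cast; rfl
    rw [h, contDiff_succ_iff_fderiv]
    refine ⟨fun c => (avg_hasFDerivAt μ d hφ c).differentiableAt, by simp, ?_⟩
    have : fderiv ℂ (avg μ d φ) = fun c => (∑ i, avg μ d (fun U => φ U * Bm d U i i) c •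
        (ContinuousLinearMap.proj i : (Fin p → ℂ) →L[ℂ] ℂ)) := by
      funext c; exact (avg_hasFDerivAt μ d hφ c).fderiv
    rw [this]
    refine ContDiff.sum fun i _ => ?_
    exact (ih (by fun_prop)).smul contDiff_const

lemma avg_fderiv (μ : Measure (Matrix.unitaryGroup (Fin p) ℂ)) [IsProbabilityMeasure μ]
    (d : Fin p → ℂ) {φ : Matrix.unitaryGroup (Fin p) ℂ → ℂ} (hφ : Continuous φ)
    (c : Fin p → ℂ) (i : Fin p) :
    fderiv ℂ (avg μ d φ) c (Pi.single i 1) = avg μ d (fun U => φ U * Bm d U i i) c := by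
  rw [(avg_hasFDerivAt μ d hφ c).fderiv]
  simp [Pi.single_apply]

end Avg


section SD
variable {p : ℕ}

lemma Bm_mul (d : Fin p → ℂ) (U V : Matrix.unitaryGroup (Fin p) ℂ) :
    Bm d (U * V) = star V.1 * Bm d U * V.1 := by
  simp only [Bm, Submonoid.coe_mul, star_mul, mul_assoc]

/-- coordinate projection -/
noncomputable def PI (I : Finset (Fin p)) : Matrix (Fin p) (Fin p) ℂ :=
  Matrix.diagonal (fun i => if i ∈ I then 1 else 0)

/-- compression of a matrix to the block indexed by `I`, completed by the identity -/
noncomputable def MI (I : Finset (Fin p)) (B : Matrix (Fin p) (Fin p) ℂ) :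
    Matrix (Fin p) (Fin p) ℂ := PI I * B * PI I + (1 - PI I)

lemma MI_apply (I : Finset (Fin p)) (B : Matrix (Fin p) (Fin p) ℂ) (r l : Fin p) :
    MI I B r l = if r ∈ I then (if l ∈ I then B r l else 0) else (if r = l then 1 else 0) := by
  simp only [MI, PI, Matrix.add_apply, Matrix.mul_diagonal, Matrix.diagonal_mul, Matrix.sub_apply,
    Matrix.one_apply, Matrix.diagonal_apply]
  by_cases h1 : r ∈ I <;> by_cases h2 : l ∈ I <;> by_cases h3 : r = l <;> simp_all

lemma star_PI (I : Finset (Fin p)) : star (PI I) = PI I := by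
  rw [PI, Matrix.star_eq_conjTranspose, Matrix.diagonal_conjTranspose]
  congr 1; funext i; by_cases h : i ∈ I <;> simp [h]

lemma MI_conj (I : Finset (Fin p)) (B : Matrix (Fin p) (Fin p) ℂ)
    (V : Matrix.unitaryGroup (Fin p) ℂ) (hV : Commute (PI I) V.1) :
    MI I (star V.1 * B * V.1) = star V.1 * MI I B * V.1 := by
  have h1 : PI I * V.1 = V.1 * PI I := hV
  have h2 : PI I * star V.1 = star V.1 * PI I := by
    have := congrArg star h1
    rw [star_mul, star_mul, star_PI] at this
    exact this.symm
  have h3 : star V.1 * V.1 = 1 := Matrix.mem_unitaryGroup_iff'.1 V.2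
  unfold MI
  have e1 : PI I * (star V.1 * B * V.1) * PI I = star V.1 * (PI I * B * PI I) * V.1 := by
    calc _ = (PI I * star V.1) * B * (V.1 * PI I) := by simp only [mul_assoc]
      _ = (star V.1 * PI I) * B * (PI I * V.1) := by rw [h1, h2]
      _ = _ := by simp only [mul_assoc]
  have e2 : star V.1 * (1 - PI I) * V.1 = 1 - PI I := by
    rw [mul_assoc, sub_mul, h1, one_mul, mul_sub, ← mul_assoc, h3, one_mul]
  rw [mul_add, add_mul, e1, e2]

lemma adjugate_conj (M : Matrix (Fin p) (Fin p) ℂ) (V : Matrix.unitaryGroup (Fin p) ℂ) :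
    (star V.1 * M * V.1).adjugate = star V.1 * M.adjugate * V.1 := by
  have h3 : star V.1 * V.1 = 1 := Matrix.mem_unitaryGroup_iff'.1 V.2
  have h4 : V.1 * star V.1 = 1 := Matrix.mem_unitaryGroup_iff.1 V.2
  have h5 : (star V.1).det * V.1.det = 1 := by rw [← Matrix.det_mul, h3, Matrix.det_one]
  have a1 : V.1.adjugate = V.1.det • star V.1 := by
    calc _ = V.1.adjugate * (V.1 * star V.1) := by rw [h4, mul_one]
      _ = _ := by rw [← mul_assoc, Matrix.adjugate_mul, Matrix.smul_mul, one_mul]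
  have a2 : (star V.1).adjugate = (star V.1).det • V.1 := by
    calc _ = (star V.1).adjugate * (star V.1 * V.1) := by rw [h3, mul_one]
      _ = _ := by rw [← mul_assoc, Matrix.adjugate_mul, Matrix.smul_mul, one_mul]
  rw [Matrix.adjugate_mul_distrib, Matrix.adjugate_mul_distrib, a1, a2]
  simp only [Matrix.smul_mul, Matrix.mul_smul, smul_smul]
  rw [h5, one_smul, mul_assoc]

lemma conj_deriv (V : ℝ → Matrix.unitaryGroup (Fin p) ℂ) (X : Matrix (Fin p) (Fin p) ℂ)
    (hX : star X = -X) (hV0 : V 0 = 1)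
    (hV : ∀ i j, HasDerivAt (fun s => (V s).1 i j) (X i j) 0)
    (A : Matrix (Fin p) (Fin p) ℂ) (a b : Fin p) :
    HasDerivAt (fun s => (star (V s).1 * A * (V s).1) a b) ((A * X - X * A) a b) 0 := by
  have h1 : HasDerivAt (fun s => (star (V s).1 * A * (V s).1) a b)
      (∑ k, ((∑ l, star (X l a) * A l k) * (V 0).1 k b +
        (∑ l, star ((V 0).1 l a) * A l k) * X k b)) 0 := by
    simp only [Matrix.mul_apply, Matrix.star_apply]
    refine HasDerivAt.fun_sum fun k _ => ?_
    refine HasDerivAt.mul ?_ (hV k b)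
    refine HasDerivAt.fun_sum fun l _ => ?_
    exact ((hV l a).star).mul_const _
  refine h1.congr_deriv ?_
  have : A * X - X * A = star X * A * (1 : Matrix _ _ ℂ) + star (1 : Matrix _ _ ℂ) * A * X := by
    rw [hX]; simp; abel
  rw [this, hV0]
  simp only [Matrix.add_apply, Matrix.mul_apply, Matrix.star_apply, Finset.sum_add_distrib]
  rfl

lemma expo_mul (d c : Fin p → ℂ) (U V : Matrix.unitaryGroup (Fin p) ℂ) :
    expo d c (U * V) = ∑ i, c i * (star V.1 * Bm d U * V.1) i i := by
  simp only [expo, Bm_mul]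

@[fun_prop]
lemma continuous_MI_det (d : Fin p → ℂ) (I : Finset (Fin p)) :
    Continuous (fun U => (MI I (Bm d U)).det) := by
  unfold MI; fun_prop

@[fun_prop]
lemma continuous_MI_adj (d : Fin p → ℂ) (I : Finset (Fin p)) (a b : Fin p) :
    Continuous (fun U => (MI I (Bm d U)).adjugate a b) := by
  have : Continuous (fun U => (MI I (Bm d U)).adjugate) := by
    refine Continuous.matrix_adjugate ?_
    unfold MI; fun_prop
  exact this.matrix_elem a b

@[fun_prop]
lemma continuous_MI_adj_mul (d : Fin p → ℂ) (I : Finset (Fin p)) (X : Matrix (Fin p) (Fin p) ℂ)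
    (a b : Fin p) :
    Continuous (fun U => ((MI I (Bm d U)).adjugate * X - X * (MI I (Bm d U)).adjugate) a b) := by
  simp only [Matrix.sub_apply, Matrix.mul_apply]; fun_prop

@[fun_prop]
lemma continuous_Bm_mul (d : Fin p → ℂ) (X : Matrix (Fin p) (Fin p) ℂ)
    (a b : Fin p) :
    Continuous (fun U => (Bm d U * X - X * Bm d U) a b) := by
  simp only [Matrix.sub_apply, Matrix.mul_apply]; fun_prop

/-- the Schwinger-Dyson functional -/
noncomputable def SDf (d c : Fin p → ℂ) (I : Finset (Fin p)) (a b : Fin p)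
    (X : Matrix (Fin p) (Fin p) ℂ) (U : Matrix.unitaryGroup (Fin p) ℂ) : ℂ :=
  ((MI I (Bm d U)).adjugate * X - X * (MI I (Bm d U)).adjugate) a b +
    (MI I (Bm d U)).adjugate a b * ∑ k, c k * (Bm d U * X - X * Bm d U) k k

@[fun_prop]
lemma continuous_SDf (d c : Fin p → ℂ) (I : Finset (Fin p)) (a b : Fin p)
    (X : Matrix (Fin p) (Fin p) ℂ) : Continuous (SDf d c I a b X) := by
  unfold SDf
  exact (continuous_MI_adj_mul d I X a b).add ((continuous_MI_adj d I a b).mul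
    (continuous_finsetSum _ fun k _ => continuous_const.mul (continuous_Bm_mul d X k k)))

lemma SD_skew (μ : Measure (Matrix.unitaryGroup (Fin p) ℂ)) [μ.IsHaarMeasure]
    [IsProbabilityMeasure μ] (d c : Fin p → ℂ) (I : Finset (Fin p)) (a b : Fin p)
    (X : Matrix (Fin p) (Fin p) ℂ) (hX : star X = -X) (hPX : Commute (PI I) X) :
    avg μ d (SDf d c I a b X) c = 0 := by
  obtain ⟨V, hV0, hVa, hVd, hVc⟩ := exists_oneparam X hX
  have hc := hVc _ hPX
  refine integral_deriv_zero μ V hVa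
    (f := fun U => (MI I (Bm d U)).adjugate a b * Complex.exp (expo d c U))
    (by fun_prop) (by fun_prop) ?_
  intro U
  have h1 := conj_deriv V X hX hV0 hVd (MI I (Bm d U)).adjugate a b
  have h2 : HasDerivAt (fun s => expo d c (U * V s))
      (∑ k, c k * (Bm d U * X - X * Bm d U) k k) 0 := by
    simp only [expo_mul]
    refine HasDerivAt.fun_sum fun k _ => ?_
    exact (conj_deriv V X hX hV0 hVd (Bm d U) k k).const_mul _
  have h3 := h1.mul h2.cexp
  have e : (fun s => (MI I (Bm d (U * V s))).adjugate a b * Complex.exp (expo d c (U * V s))) =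
      fun s => (star (V s).1 * (MI I (Bm d U)).adjugate * (V s).1) a b *
        Complex.exp (expo d c (U * V s)) := by
    funext s
    rw [Bm_mul, MI_conj I _ _ (hc s), adjugate_conj]
  rw [e]
  refine h3.congr_deriv ?_
  rw [hV0]
  simp only [mul_one, OneMemClass.coe_one, star_one, one_mul, SDf]
  ring

lemma SDf_lin (d c : Fin p → ℂ) (I : Finset (Fin p)) (a b : Fin p)
    (X Y : Matrix (Fin p) (Fin p) ℂ) (s t : ℂ) (U : Matrix.unitaryGroup (Fin p) ℂ) :
    SDf d c I a b (s • X + t • Y) U = s * SDf d c I a b X U + t * SDf d c I a b Y U := by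
  have h : ∀ (M : Matrix (Fin p) (Fin p) ℂ) (a b : Fin p),
      (M * (s • X + t • Y) - (s • X + t • Y) * M) a b =
      s * (M * X - X * M) a b + t * (M * Y - Y * M) a b := by
    intro M a b
    simp only [mul_add, add_mul, Matrix.mul_smul, Matrix.smul_mul, Matrix.sub_apply,
      Matrix.add_apply, Matrix.smul_apply, smul_eq_mul]
    ring
  simp only [SDf, h]
  simp only [mul_add, Finset.sum_add_distrib, Finset.mul_sum]
  have h2 : ∀ (w : ℂ) (g : Fin p → ℂ) (m : ℂ), ∑ x, m * (c x * (w * g x)) =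
      ∑ x, w * (m * (c x * g x)) := fun w g m => Finset.sum_congr rfl fun x _ => by ring
  rw [h2, h2]
  ring

lemma SD_single (μ : Measure (Matrix.unitaryGroup (Fin p) ℂ)) [μ.IsHaarMeasure]
    [IsProbabilityMeasure μ] (d c : Fin p → ℂ) (I : Finset (Fin p)) (a b : Fin p)
    (i j : Fin p) (hi : i ∈ I) (hj : j ∈ I) :
    avg μ d (SDf d c I a b (Matrix.single j i 1)) c = 0 := by
  have hcomm : ∀ i ∈ I, ∀ j ∈ I, Commute (PI I) (Matrix.single i j (1 : ℂ)) := by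
    intro i hi j hj
    ext r l
    simp only [PI, Matrix.diagonal_mul, Matrix.mul_diagonal, Matrix.single_apply]
    by_cases h : i = r ∧ j = l
    · obtain ⟨rfl, rfl⟩ := h; simp [hi, hj]
    · simp [h]
  have hst : ∀ i j : Fin p, star (Matrix.single i j (1 : ℂ)) = Matrix.single j i 1 := by
    intro i j
    rw [Matrix.star_eq_conjTranspose, Matrix.conjTranspose_single, star_one]
  let X1 : Matrix (Fin p) (Fin p) ℂ := Matrix.single j i 1 - Matrix.single i j 1
  let X2 : Matrix (Fin p) (Fin p) ℂ := Complex.I • (Matrix.single j i 1 + Matrix.single i j 1)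
  have s1 : star X1 = -X1 := by simp only [X1, star_sub, hst, neg_sub]
  have s2 : star X2 = -X2 := by
    simp only [X2, star_smul, star_add, hst, Complex.star_def, Complex.conj_I, neg_smul]
    rw [add_comm]
  have c1 : Commute (PI I) X1 := (hcomm j hj i hi).sub_right (hcomm i hi j hj)
  have c2 : Commute (PI I) X2 :=
    ((hcomm j hj i hi).add_right (hcomm i hi j hj)).smul_right _
  have e : (Matrix.single j i (1 : ℂ)) = (1 / 2 : ℂ) • X1 + (- Complex.I / 2) • X2 := by
    simp only [X1, X2, smul_smul]
    have : -Complex.I / 2 * Complex.I = 1 / 2 := by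
      rw [div_mul_eq_mul_div, neg_mul, Complex.I_mul_I, neg_neg]
    rw [this]
    module
  rw [e]
  have h := SDf_lin d c I a b X1 X2 (1 / 2 : ℂ) (- Complex.I / 2)
  rw [show SDf d c I a b ((1 / 2 : ℂ) • X1 + (- Complex.I / 2) • X2) = fun U =>
    (1 / 2 : ℂ) * SDf d c I a b X1 U + (- Complex.I / 2) * SDf d c I a b X2 U from funext h]
  rw [avg_add μ d c (by fun_prop) (by fun_prop), avg_smul, avg_smul,
    SD_skew μ d c I a b X1 s1 c1, SD_skew μ d c I a b X2 s2 c2]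
  simp

lemma SD_offdiag (μ : Measure (Matrix.unitaryGroup (Fin p) ℂ)) [μ.IsHaarMeasure]
    [IsProbabilityMeasure μ] (d c : Fin p → ℂ) (I : Finset (Fin p))
    (i j : Fin p) (hi : i ∈ I) (hj : j ∈ I) :
    (c i - c j) * avg μ d (fun U => Bm d U i j * (MI I (Bm d U)).adjugate j i) c =
      avg μ d (fun U => (MI I (Bm d U)).adjugate i i) c -
      avg μ d (fun U => (MI I (Bm d U)).adjugate j j) c := by
  have h := SD_single μ d c I j i i j hi hj
  have e : SDf d c I j i (Matrix.single j i 1) = fun U =>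
      ((MI I (Bm d U)).adjugate j j - (MI I (Bm d U)).adjugate i i) +
      (c i - c j) * (Bm d U i j * (MI I (Bm d U)).adjugate j i) := by
    funext U
    have hs : ∑ k, c k * (Bm d U * Matrix.single j i (1 : ℂ) - Matrix.single j i (1 : ℂ) * Bm d U) k k =
        (c i - c j) * Bm d U i j := by
      have : ∀ k, (Bm d U * Matrix.single j i (1 : ℂ) - Matrix.single j i (1 : ℂ) * Bm d U) k k =
          (if i = k then Bm d U k j else 0) - (if j = k then Bm d U i k else 0) := by
        intro k
        simp [Matrix.mul_apply, Matrix.single_apply, ite_and]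
      simp only [this, mul_sub, Finset.sum_sub_distrib, mul_ite, mul_zero, Finset.sum_ite_eq,
        Finset.mem_univ, if_true]
      ring
    unfold SDf
    rw [hs]
    simp [Matrix.mul_apply, Matrix.single_apply]
    ring
  rw [e, avg_add μ d c (by fun_prop) (by fun_prop), avg_sub μ d c (by fun_prop) (by fun_prop),
    avg_smul] at h
  linear_combination h

lemma MI_det_expand (I : Finset (Fin p)) (B : Matrix (Fin p) (Fin p) ℂ) (i : Fin p) (hi : i ∈ I) :
    (MI I B).det = ∑ k ∈ I, B i k * (MI I B).adjugate k i := by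
  have h := congrFun (congrFun (Matrix.mul_adjugate (MI I B)) i) i
  rw [Matrix.smul_apply, Matrix.one_apply_eq, smul_eq_mul, mul_one] at h
  rw [← h, Matrix.mul_apply]
  simp only [MI_apply I B i, hi, if_true, ite_mul, zero_mul]
  rw [Finset.sum_ite_mem, Finset.univ_inter]

lemma MI_adj_diag (I : Finset (Fin p)) (B : Matrix (Fin p) (Fin p) ℂ) (i : Fin p) :
    (MI I B).adjugate i i = (MI (I.erase i) B).det := by
  rw [Matrix.adjugate_apply]
  refine Matrix.det_eq_of_forall_row_eq_smul_add_const
    (fun r => if r ∈ I.erase i then (if i ∈ I then B r i else 0) else 0) i (by simp) ?_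
  intro r l
  by_cases hr : r = i
  · subst hr; simp [MI_apply, Pi.single_apply, eq_comm]
  · rw [Matrix.updateRow_ne hr]
    by_cases hl : l = i
    · subst hl
      simp [MI_apply, hr]
    · by_cases h2 : r ∈ I <;> by_cases h3 : l ∈ I <;>
        simp [MI_apply, hr, hl, h2, h3, Ne.symm hl]

/-- the block-determinant averages -/
noncomputable def fI (μ : Measure (Matrix.unitaryGroup (Fin p) ℂ)) (d : Fin p → ℂ)
    (I : Finset (Fin p)) : (Fin p → ℂ) → ℂ := avg μ d (fun U => (MI I (Bm d U)).det)

lemma fI_rec (μ : Measure (Matrix.unitaryGroup (Fin p) ℂ)) [μ.IsHaarMeasure]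
    [IsProbabilityMeasure μ] (d c : Fin p → ℂ) (hc : Function.Injective c) (I : Finset (Fin p))
    (i : Fin p) (hi : i ∈ I) :
    fI μ d I c = fderiv ℂ (fI μ d (I.erase i)) c (Pi.single i 1) +
      ∑ j ∈ I.erase i, (c i - c j)⁻¹ * (fI μ d (I.erase i) c - fI μ d (I.erase j) c) := by
  unfold fI
  rw [avg_fderiv μ d (by fun_prop)]
  rw [show (fun U => (MI I (Bm d U)).det) = fun U => ∑ k ∈ I, Bm d U i k *
    (MI I (Bm d U)).adjugate k i from funext fun U => MI_det_expand I _ i hi]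
  rw [avg_sum μ d c I (φ := fun k U => Bm d U i k * (MI I (Bm d U)).adjugate k i)
    (fun k => by fun_prop), ← Finset.add_sum_erase _ _ hi]
  congr 1
  · simp only [MI_adj_diag, mul_comm]
  · refine Finset.sum_congr rfl fun j hj => ?_
    have hij : i ≠ j := (Finset.ne_of_mem_erase hj).symm
    have hne : c i - c j ≠ 0 := sub_ne_zero.2 (hc.ne hij)
    have h := SD_offdiag μ d c I i j hi (Finset.mem_of_mem_erase hj)
    simp only [MI_adj_diag] at h
    rw [← h, inv_mul_cancel_left₀ hne]

lemma fI_empty (μ : Measure (Matrix.unitaryGroup (Fin p) ℂ)) (d : Fin p → ℂ) :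
    fI μ d ∅ = avg μ d (fun _ => 1) := by
  unfold fI
  congr 1
  funext U
  have : MI ∅ (Bm d U) = 1 := by
    ext r l; simp [MI_apply, Matrix.one_apply]
  rw [this, Matrix.det_one]

lemma fI_univ (μ : Measure (Matrix.unitaryGroup (Fin p) ℂ)) (d : Fin p → ℂ) (c : Fin p → ℂ) :
    fI μ d Finset.univ c = (∏ a, d a) * avg μ d (fun _ => 1) c := by
  unfold fI
  rw [← avg_smul]
  congr 1
  funext U
  have : MI Finset.univ (Bm d U) = Bm d U := by
    ext r l; simp [MI_apply]
  rw [this, Bm, Matrix.det_mul_right_comm, Matrix.mem_unitaryGroup_iff'.1 U.2]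
  simp

end SD


section Radial
open scoped ContDiff
variable {p : ℕ}

/-- the open set of points with distinct coordinates -/
def Reg (p : ℕ) : TopologicalSpace.Opens (Fin p → ℂ) :=
  ⟨{c | Function.Injective c}, by
    have : {c : Fin p → ℂ | Function.Injective c} = ⋂ i, ⋂ j, {c | i ≠ j → c i ≠ c j} := by
      ext c
      simp only [Set.mem_ofPred_eq, Set.mem_iInter]
      exact ⟨fun h i j hij => h.ne hij, fun h i j hij => by_contra fun hne => h i j hne hij⟩
    rw [this]
    refine isOpen_iInter_of_finite fun i => isOpen_iInter_of_finite fun j => ?_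
    by_cases hij : i = j
    · simp [hij]
    · simp only [ne_eq, hij, not_false_eq_true, forall_const]
      exact isOpen_ne_fun (continuous_apply i) (continuous_apply j)⟩

lemma vandermonde_contDiff (p : ℕ) : ContDiff ℂ ∞ (vandermonde p) := by
  unfold vandermonde
  refine contDiff_prod fun q _ => ?_
  exact (contDiff_apply ℂ ℂ q.2).sub (contDiff_apply ℂ ℂ q.1)

/-- coordinate functions -/
noncomputable def xx (i : Fin p) : SmoothFn (Reg p) :=
  SmoothFn.mk (fun c => c i) (contDiff_apply ℂ ℂ i).contDiffOn

lemma RR_smooth (i j : Fin p) :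
    ContDiffOn ℂ ∞ (fun c : Fin p → ℂ => (c i - c j)⁻¹) (Reg p) := by
  by_cases hij : i = j
  · subst hij; simpa using contDiffOn_const
  · refine ContDiffOn.inv ((contDiff_apply ℂ ℂ i).sub (contDiff_apply ℂ ℂ j)).contDiffOn ?_
    intro c hc
    exact sub_ne_zero.2 (Function.Injective.ne hc hij)

/-- inverse differences -/
noncomputable def RR (i j : Fin p) : SmoothFn (Reg p) :=
  SmoothFn.mk (fun c => (c i - c j)⁻¹) (RR_smooth i j)

/-- integer derivations of a ring -/
abbrev DerZ (V : Type*) [CommRing V] := Derivation ℤ V V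

/-- integer derivation from an additive map -/
def mkDerZ {V : Type*} [CommRing V] (D : V →+ V) (h : ∀ a b, D (a * b) = a * D b + b * D a) :
    DerZ V := Derivation.mk' D.toIntLinearMap (by intro a b; simp [h])

/-- derivations over the integers -/
noncomputable def DZ (i : Fin p) : DerZ (SmoothFn (Reg p)) :=
  mkDerZ (V := SmoothFn (Reg p))
    (AddMonoidHom.mk' (fun f => SmoothFn.D i f) (fun a b => map_add _ a b))
    (fun a b => (SmoothFn.D i).leibniz a b)

lemma DZ_apply (i : Fin p) (f : SmoothFn (Reg p)) : DZ i f = SmoothFn.D i f := rfl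

lemma exists_phi (Ω : TopologicalSpace.Opens (Fin p → ℂ)) :
    ∃ φ : MvPolynomial (Fin p) ℂ →ₐ[ℂ] Module.End ℂ (SmoothFn Ω),
      ∀ i f, φ (MvPolynomial.X i) f = SmoothFn.D i f := by
  obtain ⟨φ, hφ⟩ := exists_aeval_End
    (fun i : Fin p => ((SmoothFn.D i : Derivation ℂ (SmoothFn Ω) (SmoothFn Ω)) :
      SmoothFn Ω →ₗ[ℂ] SmoothFn Ω))
    (fun i j => LinearMap.ext fun f => SmoothFn.D_comm i j f)
  exact ⟨φ, fun i f => by rw [hφ]; rfl⟩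

lemma radial (φ : MvPolynomial (Fin p) ℂ →ₐ[ℂ] Module.End ℂ (SmoothFn (Reg p)))
    (hφ : ∀ i f, φ (MvPolynomial.X i) f = SmoothFn.D i f) :
    RadialData (DZ (p := p)) xx RR (fun S h => φ (∏ i ∈ S, MvPolynomial.X i) h) where
  comm i j f := SmoothFn.D_comm i j f
  dx i j := by
    apply Subtype.ext; funext c
    rw [DZ_apply, SmoothFn.D_eq i (xx j) (fun c => c j) (fun _ => rfl),
      (hasFDerivAt_apply j (c : Fin p → ℂ)).fderiv]
    by_cases h : i = j
    · subst h; simp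
    · rw [if_neg h]; simp [Ne.symm h]
  inv i j hij := by
    apply Subtype.ext; funext c
    have : (c.1 i - c.1 j) ≠ 0 := sub_ne_zero.2 (Function.Injective.ne c.2 hij)
    exact mul_inv_cancel₀ this
  dS0 h := by simp
  dSi m S h hm := by
    simp only [Finset.prod_insert hm, map_mul, Module.End.mul_apply, hφ]; rfl

/-- the Vandermonde as a smooth function -/
noncomputable def vv (p : ℕ) : SmoothFn (Reg p) :=
  SmoothFn.mk (vandermonde p) (vandermonde_contDiff p).contDiffOn

lemma vv_eq : vv p = ∏ q ∈ Finset.univ.filter (fun q : Fin p × Fin p => q.1 < q.2),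
    (xx q.2 - xx q.1) := by
  apply Subtype.ext; funext c
  have h : ∀ (S : Finset (Fin p × Fin p)),
      (∏ q ∈ S, (xx q.2 - xx q.1) : SmoothFn (Reg p)).1 c = ∏ q ∈ S, (c.1 q.2 - c.1 q.1) := by
    intro S
    induction S using Finset.induction_on with
    | empty => rfl
    | insert a S ha ih => rw [Finset.prod_insert ha, Finset.prod_insert ha, ← ih]; rfl
  rw [h]; rfl

lemma pair_sum {W : Type*} [AddCommMonoid W] (i : Fin p) (r : Fin p → W) :
    ∑ q ∈ Finset.univ.filter (fun q : Fin p × Fin p => q.1 < q.2),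
      ((if i = q.2 then r q.1 else 0) + (if i = q.1 then r q.2 else 0)) =
    ∑ j ∈ Finset.univ.erase i, r j := by
  have e1 : ∀ j, (if j ≠ i then r j else 0) = (if j < i then r j else 0) +
      (if i < j then r j else 0) := by
    intro j
    rcases lt_trichotomy j i with h | h | h
    · simp [h, h.ne, h.not_gt]
    · simp [h]
    · simp [h, h.ne', h.not_gt]
  have e2 : Finset.univ.erase i = Finset.univ.filter (fun j => j ≠ i) := by
    ext j; simp
  rw [e2, Finset.sum_filter (fun j => j ≠ i), Finset.sum_congr rfl (fun j _ => e1 j), Finset.sum_add_distrib,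
    Finset.sum_add_distrib, Finset.sum_filter, Finset.sum_filter, Fintype.sum_prod_type,
    Fintype.sum_prod_type]
  congr 1
  · refine Finset.sum_congr rfl fun a _ => ?_
    rw [Finset.sum_eq_single i]
    · simp
    · intro b _ hb; simp [Ne.symm hb]
    · simp
  · rw [Finset.sum_eq_single i]
    · simp
    · intro b _ hb; simp [Ne.symm hb]
    · simp

lemma vv_deriv (φ : MvPolynomial (Fin p) ℂ →ₐ[ℂ] Module.End ℂ (SmoothFn (Reg p)))
    (hφ : ∀ i f, φ (MvPolynomial.X i) f = SmoothFn.D i f) (i : Fin p) :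
    DZ i (vv p) = vv p * ∑ j ∈ Finset.univ.erase i, RR i j := by
  have H := radial φ hφ
  rw [← pair_sum i (fun j => RR i j), vv_eq]
  refine RadialData.d_prod (DZ i) _ _ _ ?_
  intro q hq
  have hq : q.1 < q.2 := (Finset.mem_filter.1 hq).2
  have hinv := H.inv q.2 q.1 hq.ne'
  rw [map_sub, H.dx, H.dx]
  by_cases h1 : i = q.2
  · have h2 : i ≠ q.1 := by rw [h1]; exact hq.ne'
    rw [if_pos h1, if_neg h2, if_pos h1, if_neg h2, h1, add_zero, hinv]
    simp
  · rw [if_neg h1, if_neg h1]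
    by_cases h2 : i = q.1
    · rw [if_pos h2, if_pos h2, h2, H.anti hq.ne']
      linear_combination hinv
    · rw [if_neg h2, if_neg h2]; simp

/-- block averages as smooth functions -/
noncomputable def ff (μ : Measure (Matrix.unitaryGroup (Fin p) ℂ)) [IsProbabilityMeasure μ]
    (d : Fin p → ℂ) (I : Finset (Fin p)) : SmoothFn (Reg p) :=
  SmoothFn.mk (fI μ d I) (avg_contDiff μ d (continuous_MI_det d I)).contDiffOn

lemma sum_apply_fn {Ω : TopologicalSpace.Opens (Fin p → ℂ)} {κ : Type*} (S : Finset κ)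
    (g : κ → SmoothFn Ω) (x : Ω) : (∑ k ∈ S, g k).1 x = ∑ k ∈ S, (g k).1 x := by
  classical
  induction S using Finset.induction_on with
  | empty => rfl
  | insert a S ha ih => rw [Finset.sum_insert ha, Finset.sum_insert ha, ← ih]; rfl

lemma ff_rec (μ : Measure (Matrix.unitaryGroup (Fin p) ℂ)) [μ.IsHaarMeasure]
    [IsProbabilityMeasure μ] (d : Fin p → ℂ) (I : Finset (Fin p)) (i : Fin p) (hi : i ∈ I) :
    ff μ d I = DZ i (ff μ d (I.erase i)) + ∑ j ∈ I.erase i,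
      RR i j * (ff μ d (I.erase i) - ff μ d (I.erase j)) := by
  apply Subtype.ext; funext c
  have h := fI_rec μ d c.1 c.2 I i hi
  have h1 := SmoothFn.D_eq i (ff μ d (I.erase i)) (fI μ d (I.erase i)) (fun _ => rfl) c
  have h2 : (DZ i (ff μ d (I.erase i)) + ∑ j ∈ I.erase i,
      RR i j * (ff μ d (I.erase i) - ff μ d (I.erase j))).1 c =
      (SmoothFn.D i (ff μ d (I.erase i))).1 c + (∑ j ∈ I.erase i,
      RR i j * (ff μ d (I.erase i) - ff μ d (I.erase j))).1 c := rfl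
  rw [h2, h1, sum_apply_fn]
  exact h

lemma main_reg (μ : Measure (Matrix.unitaryGroup (Fin p) ℂ)) [μ.IsHaarMeasure]
    [IsProbabilityMeasure μ] (d : Fin p → ℂ)
    (φ : MvPolynomial (Fin p) ℂ →ₐ[ℂ] Module.End ℂ (SmoothFn (Reg p)))
    (hφ : ∀ i f, φ (MvPolynomial.X i) f = SmoothFn.D i f) :
    vv p * ff μ d Finset.univ = φ (∏ i, MvPolynomial.X i) (vv p * ff μ d ∅) :=
  (radial φ hφ).main (ff μ d) (ff_rec μ d) Finset.univ (vv p) (fun i _ => vv_deriv φ hφ i)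

/-- the function `Δ F` on all of `ℂ^p` -/
noncomputable def GG (μ : Measure (Matrix.unitaryGroup (Fin p) ℂ)) [IsProbabilityMeasure μ]
    (d : Fin p → ℂ) : SmoothFn (TopO p) :=
  SmoothFn.mk (fun c => vandermonde p c * avg μ d (fun _ => 1) c)
    ((vandermonde_contDiff p).mul (avg_contDiff μ d continuous_const)).contDiffOn

lemma res_prod (φ : MvPolynomial (Fin p) ℂ →ₐ[ℂ] Module.End ℂ (SmoothFn (Reg p)))
    (hφ : ∀ i f, φ (MvPolynomial.X i) f = SmoothFn.D i f)
    (ψ : MvPolynomial (Fin p) ℂ →ₐ[ℂ] Module.End ℂ (SmoothFn (TopO p)))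
    (hψ : ∀ i f, ψ (MvPolynomial.X i) f = SmoothFn.D i f) (S : Finset (Fin p))
    (f : SmoothFn (TopO p)) :
    φ (∏ i ∈ S, MvPolynomial.X i) (SmoothFn.res (Reg p) f) =
      SmoothFn.res (Reg p) (ψ (∏ i ∈ S, MvPolynomial.X i) f) := by
  induction S using Finset.induction_on with
  | empty => simp
  | insert a S ha ih =>
    rw [Finset.prod_insert ha, map_mul, map_mul, Module.End.mul_apply, Module.End.mul_apply, ih,
      hφ, hψ, SmoothFn.D_res]

lemma dense_reg (c : Fin p → ℂ) (g h : (Fin p → ℂ) → ℂ) (hg : Continuous g) (hh : Continuous h)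
    (H : ∀ c, Function.Injective c → g c = h c) : g c = h c := by
  have hinj : ∀ᶠ s : ℂ in nhdsWithin 0 {0}ᶜ,
      Function.Injective (fun i : Fin p => c i + s * (i : ℕ)) := by
    have h1 : ∀ i j : Fin p, i ≠ j → ∀ᶠ s : ℂ in nhdsWithin 0 {0}ᶜ,
        c i + s * (i : ℕ) ≠ c j + s * (j : ℕ) := by
      intro i j hij
      have hne : ((i : ℕ) : ℂ) - (j : ℕ) ≠ 0 := by
        rw [sub_ne_zero]; exact_mod_cast fun h => hij (Fin.ext h)
      by_cases hcc : c i = c j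
      · filter_upwards [self_mem_nhdsWithin] with s hs heq
        rw [hcc] at heq
        have : s * (((i : ℕ) : ℂ) - (j : ℕ)) = 0 := by linear_combination heq
        exact (mul_ne_zero hs hne) this
      · have hc : ContinuousAt (fun s : ℂ => (c i + s * (i : ℕ)) - (c j + s * (j : ℕ))) 0 := by
          fun_prop
        have := hc.eventually_ne (y := 0) (by simpa [sub_eq_zero] using hcc)
        filter_upwards [nhdsWithin_le_nhds this] with s hs heq
        exact hs (sub_eq_zero.2 heq)
    have h2 : ∀ᶠ s : ℂ in nhdsWithin 0 {0}ᶜ, ∀ i j : Fin p, i ≠ j →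
        c i + s * (i : ℕ) ≠ c j + s * (j : ℕ) := by
      rw [Filter.eventually_all]; intro i
      rw [Filter.eventually_all]; intro j
      by_cases hij : i = j
      · simp [hij]
      · filter_upwards [h1 i j hij] with s hs _ using hs
    filter_upwards [h2] with s hs i j hij
    exact by_contra fun hne => hs i j hne hij
  have ht : ∀ g : (Fin p → ℂ) → ℂ, Continuous g → Filter.Tendsto
      (fun s : ℂ => g (fun i => c i + s * (i : ℕ))) (nhdsWithin 0 {0}ᶜ) (nhds (g c)) := by
    intro g hg
    have : Continuous (fun s : ℂ => g (fun i : Fin p => c i + s * (i : ℕ))) := by fun_prop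
    have h0 := this.tendsto 0
    simp only [zero_mul, add_zero] at h0
    exact h0.mono_left nhdsWithin_le_nhds
  refine tendsto_nhds_unique (ht g hg) ((ht h hh).congr' ?_)
  filter_upwards [hinj] with s hs using (H _ hs).symm

lemma main_top (μ : Measure (Matrix.unitaryGroup (Fin p) ℂ)) [μ.IsHaarMeasure]
    [IsProbabilityMeasure μ] (d : Fin p → ℂ)
    (ψ : MvPolynomial (Fin p) ℂ →ₐ[ℂ] Module.End ℂ (SmoothFn (TopO p)))
    (hψ : ∀ i f, ψ (MvPolynomial.X i) f = SmoothFn.D i f) :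
    ψ (∏ i, MvPolynomial.X i) (GG μ d) = (∏ a, d a) • GG μ d := by
  obtain ⟨φ, hφ⟩ := exists_phi (Reg p)
  apply Subtype.ext; funext c
  refine dense_reg c.1 _ _ (SmoothFn.continuous_top (ψ (∏ i, MvPolynomial.X i) (GG μ d)))
    (SmoothFn.continuous_top ((∏ a, d a) • GG μ d)) ?_
  intro x hx
  have h := main_reg μ d φ hφ
  have hr : vv p * ff μ d ∅ = SmoothFn.res (Reg p) (GG μ d) := by
    apply Subtype.ext; funext y
    rw [SmoothFn.res_apply]
    show vandermonde p y * fI μ d ∅ y = vandermonde p y * avg μ d (fun _ => 1) y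
    rw [fI_empty]
  rw [hr, res_prod φ hφ ψ hψ] at h
  have h2 := congrArg (fun f : SmoothFn (Reg p) => f.1 ⟨x, hx⟩) h
  simp only [SmoothFn.res_apply] at h2
  rw [← h2]
  show vandermonde p x * fI μ d Finset.univ x = (∏ a, d a) * (vandermonde p x * avg μ d _ x)
  rw [fI_univ]; ring

/-- exponential twist -/
noncomputable def EE (p : ℕ) (z : ℂ) : SmoothFn (TopO p) :=
  SmoothFn.mk (fun c => Complex.exp (z * ∑ i, c i)) (by
    refine ContDiff.contDiffOn (ContDiff.cexp ?_)
    exact contDiff_const.mul (ContDiff.sum fun i _ => contDiff_apply ℂ ℂ i))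

lemma EE_D (z : ℂ) (i : Fin p) : SmoothFn.D i (EE p z) = z • EE p z := by
  apply Subtype.ext; funext c
  rw [SmoothFn.D_eq i (EE p z) (fun c => Complex.exp (z * ∑ i, c i)) (fun _ => rfl)]
  have h1 : HasFDerivAt (fun c : Fin p → ℂ => z * ∑ i, c i)
      (z • ∑ i, (ContinuousLinearMap.proj i : (Fin p → ℂ) →L[ℂ] ℂ)) c.1 :=
    (HasFDerivAt.fun_sum fun j _ => hasFDerivAt_apply j c.1).const_mul z
  rw [h1.cexp.fderiv]
  have : (z • EE p z).1 c = z * Complex.exp (z * ∑ i, c.1 i) := rfl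
  rw [this]
  simp [Pi.single_apply]
  ring

lemma EE_mul (z w : ℂ) : EE p z * EE p w = EE p (z + w) := by
  apply Subtype.ext; funext c
  show Complex.exp (z * ∑ i, c.1 i) * Complex.exp (w * ∑ i, c.1 i) = Complex.exp ((z + w) * ∑ i, c.1 i)
  rw [← Complex.exp_add]; ring_nf

lemma EE_zero : EE p 0 = 1 := by
  apply Subtype.ext; funext c
  show Complex.exp (0 * ∑ i, c.1 i) = 1
  simp

lemma twist (ψ : MvPolynomial (Fin p) ℂ →ₐ[ℂ] Module.End ℂ (SmoothFn (TopO p)))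
    (hψ : ∀ i f, ψ (MvPolynomial.X i) f = SmoothFn.D i f) (z : ℂ) (S : Finset (Fin p))
    (f : SmoothFn (TopO p)) :
    ψ (∏ i ∈ S, MvPolynomial.X i) (EE p (-z) * f) =
      EE p (-z) * ψ (∏ i ∈ S, (MvPolynomial.X i - MvPolynomial.C z)) f := by
  induction S using Finset.induction_on with
  | empty => simp
  | insert a S ha ih =>
    rw [Finset.prod_insert ha, Finset.prod_insert ha, map_mul ψ, map_mul ψ, Module.End.mul_apply,
      Module.End.mul_apply, ih, map_sub ψ, ← MvPolynomial.algebraMap_eq, AlgHom.commutes,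
      LinearMap.sub_apply, hψ, hψ, Derivation.leibniz, EE_D, Module.algebraMap_end_apply]
    have key : ∀ E h g : SmoothFn (TopO p), E * g + h * ((-z) • E) = E * (g - z • h) := by
      intro E h g
      apply Subtype.ext; funext c
      show E.1 c * g.1 c + h.1 c * (-z * E.1 c) = E.1 c * (g.1 c - z * h.1 c)
      ring
    exact key _ _ _

lemma Bm_shift (d : Fin p → ℂ) (z : ℂ) (U : Matrix.unitaryGroup (Fin p) ℂ) (i : Fin p) :
    Bm (fun a => d a - z) U i i = Bm d U i i - z := by
  have h : Matrix.diagonal (fun a => d a - z) = Matrix.diagonal d - z • (1 : Matrix _ _ ℂ) := by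
    ext r l
    by_cases hrl : r = l
    · subst hrl; simp
    · simp [hrl]
  unfold Bm
  rw [h, mul_sub, sub_mul, Matrix.mul_smul, Matrix.smul_mul, mul_one,
    Matrix.mem_unitaryGroup_iff'.1 U.2]
  simp

lemma GG_shift (μ : Measure (Matrix.unitaryGroup (Fin p) ℂ)) 
    [IsProbabilityMeasure μ] (d : Fin p → ℂ) (z : ℂ) :
    GG μ (fun a => d a - z) = EE p (-z) * GG μ d := by
  apply Subtype.ext; funext c
  show vandermonde p c.1 * avg μ (fun a => d a - z) _ c.1 =
    Complex.exp (-z * ∑ i, c.1 i) * (vandermonde p c.1 * avg μ d _ c.1)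
  have : avg μ (fun a => d a - z) (fun _ => 1) c.1 =
      Complex.exp (-z * ∑ i, c.1 i) * avg μ d (fun _ => 1) c.1 := by
    unfold avg
    rw [← integral_const_mul]
    congr 1; funext U
    rw [one_mul, one_mul, ← Complex.exp_add]
    congr 1
    simp only [expo, Bm_shift, mul_sub, Finset.sum_sub_distrib, ← Finset.sum_mul]
    ring
  rw [this]; ring

lemma main_shift (μ : Measure (Matrix.unitaryGroup (Fin p) ℂ)) [μ.IsHaarMeasure]
    [IsProbabilityMeasure μ] (d : Fin p → ℂ)
    (ψ : MvPolynomial (Fin p) ℂ →ₐ[ℂ] Module.End ℂ (SmoothFn (TopO p)))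
    (hψ : ∀ i f, ψ (MvPolynomial.X i) f = SmoothFn.D i f) (z : ℂ) :
    ψ (∏ i, (MvPolynomial.X i - MvPolynomial.C z)) (GG μ d) = (∏ a, (d a - z)) • GG μ d := by
  have h := main_top μ (fun a => d a - z) ψ hψ
  rw [GG_shift, twist ψ hψ, ← mul_smul_comm] at h
  have h2 := congrArg (fun f => EE p z * f) h
  simp only [← mul_assoc, EE_mul, add_neg_cancel, EE_zero, one_mul] at h2
  exact h2

end Radial


section Final
variable {p : ℕ}

lemma vandermonde_eq_det (v : Fin p → ℂ) : vandermonde p v = (Matrix.vandermonde v).det := by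
  rw [Matrix.det_vandermonde, vandermonde, Finset.prod_filter, Fintype.prod_prod_type]
  refine Finset.prod_congr rfl fun i _ => ?_
  rw [← Finset.prod_filter]
  refine Finset.prod_congr ?_ fun _ _ => rfl
  ext j; simp

lemma vandermonde_perm (c : Fin p → ℂ) (σ : Equiv.Perm (Fin p)) :
    vandermonde p (fun i => c (σ i)) = (Equiv.Perm.sign σ : ℂ) * vandermonde p c := by
  rw [vandermonde_eq_det, vandermonde_eq_det, ← Matrix.det_permute]
  rfl

lemma vandermonde_smul (c : Fin p → ℂ) (t : ℂ) :
    vandermonde p (fun i => t * c i) = t ^ (p * (p - 1) / 2) * vandermonde p c := by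
  have hcard : (Finset.univ.filter (fun q : Fin p × Fin p => q.1 < q.2)).card =
      p * (p - 1) / 2 := by
    rw [Finset.card_filter, Fintype.sum_prod_type_right, ← Finset.sum_range_id,
      Finset.sum_range]
    refine Finset.sum_congr rfl fun j _ => ?_
    rw [← Finset.card_filter]
    have : Finset.univ.filter (fun x : Fin p => x < j) = Finset.Iio j := by ext; simp
    rw [this, Fin.card_Iio]
  unfold vandermonde
  rw [← hcard, ← Finset.prod_const, ← Finset.prod_mul_distrib]
  exact Finset.prod_congr rfl fun q _ => by ring

lemma vandermonde_nat (hp : 1 ≤ p) :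
    vandermonde p (fun i => ((i : ℕ) : ℂ)) = ∏ j ∈ Finset.range p, (Nat.factorial j : ℂ) := by
  obtain ⟨n, rfl⟩ : ∃ n, p = n + 1 := ⟨p - 1, by omega⟩
  rw [vandermonde_eq_det, Matrix.det_vandermonde_id_eq_superFactorial,
    ← Nat.prod_range_factorial_succ, Finset.prod_range_succ']
  push_cast
  simp

lemma avg_perm (μ : Measure (Matrix.unitaryGroup (Fin p) ℂ)) [μ.IsHaarMeasure]
    [IsProbabilityMeasure μ] (d c : Fin p → ℂ) (σ : Equiv.Perm (Fin p)) :
    avg μ d (fun _ => 1) (fun i => c (σ i)) = avg μ d (fun _ => 1) c := by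
  let W0 : Matrix (Fin p) (Fin p) ℂ := Matrix.of fun r l => if l = σ r then 1 else 0
  have hW : W0 ∈ Matrix.unitaryGroup (Fin p) ℂ := by
    rw [Matrix.mem_unitaryGroup_iff]
    ext r l
    simp only [W0, Matrix.mul_apply, Matrix.star_apply, Matrix.of_apply, Matrix.one_apply]
    simp
    exact if_congr eq_comm rfl rfl
  let W : Matrix.unitaryGroup (Fin p) ℂ := ⟨W0, hW⟩
  unfold avg
  rw [← integral_right_mul μ W (fun U => 1 * Complex.exp (expo d c U))]
  congr 1; funext U
  rw [expo_mul]
  congr 2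
  have : ∀ i, (star W.1 * Bm d U * W.1) i i = Bm d U (σ.symm i) (σ.symm i) := by
    intro i
    simp only [W, W0, Matrix.mul_apply, Matrix.star_apply, Matrix.of_apply]
    have h : ∀ x, (i = σ x) ↔ (x = σ.symm i) := fun x => by
      rw [eq_comm, Equiv.eq_symm_apply]
    simp [h]
  simp only [this]
  unfold expo
  rw [← Equiv.sum_comp σ (fun i => c i * Bm d U (σ.symm i) (σ.symm i))]
  simp

lemma avg_zero (μ : Measure (Matrix.unitaryGroup (Fin p) ℂ)) [IsProbabilityMeasure μ]
    (d : Fin p → ℂ) : avg μ d (fun _ => 1) 0 = 1 := by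
  simp [avg, expo]

lemma exists_hciz_const (hp : 1 ≤ p) (μ : Measure (Matrix.unitaryGroup (Fin p) ℂ)) [μ.IsHaarMeasure]
    [IsProbabilityMeasure μ] (d : Fin p → ℂ) (hd : Function.Injective d) :
    ∃ κ : ℂ, ∀ c : Fin p → ℂ, vandermonde p c * avg μ d (fun _ => 1) c =
      κ * (Matrix.of fun i j : Fin p => Complex.exp (c i * d j)).det := by
  obtain ⟨ψ, hψ⟩ := exists_phi (TopO p)
  obtain ⟨K, hK⟩ := uniq_exp ψ hψ d hd hp (GG μ d) (main_shift μ d ψ hψ)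
  have hK : ∀ c : Fin p → ℂ, vandermonde p c * avg μ d (fun _ => 1) c =
    ∑ a, K a * Complex.exp (∑ i, c i * d (a i)) := hK
  have hfac : (Nat.factorial p : ℂ) ≠ 0 := by exact_mod_cast Nat.factorial_ne_zero p
  refine ⟨(∑ a : Fin p → Fin p, K a *
    ((1 : Matrix (Fin p) (Fin p) ℂ).submatrix id a).det) / Nat.factorial p, fun c => ?_⟩
  have h1 : (Nat.factorial p : ℂ) * (vandermonde p c * avg μ d (fun _ => 1) c) =
      ∑ σ : Equiv.Perm (Fin p), (Equiv.Perm.sign σ : ℂ) *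
        (vandermonde p (fun i => c (σ i)) * avg μ d (fun _ => 1) (fun i => c (σ i))) := by
    have : ∀ σ : Equiv.Perm (Fin p), (Equiv.Perm.sign σ : ℂ) *
        (vandermonde p (fun i => c (σ i)) * avg μ d (fun _ => 1) (fun i => c (σ i))) =
        vandermonde p c * avg μ d (fun _ => 1) c := by
      intro σ
      rw [vandermonde_perm, avg_perm, ← mul_assoc, ← mul_assoc]
      have : (Equiv.Perm.sign σ : ℂ) * (Equiv.Perm.sign σ : ℂ) = 1 := by
        rcases Int.units_eq_one_or (Equiv.Perm.sign σ) with h | h <;> simp [h]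
      rw [this, one_mul]
    simp only [this]
    simp [Fintype.card_perm]
  have h2 : ∀ a : Fin p → Fin p, ∑ σ : Equiv.Perm (Fin p), (Equiv.Perm.sign σ : ℂ) *
      Complex.exp (∑ i, c (σ i) * d (a i)) =
      (Matrix.of fun i j : Fin p => Complex.exp (c i * d j)).det *
        ((1 : Matrix (Fin p) (Fin p) ℂ).submatrix id a).det := by
    intro a
    rw [← Matrix.det_mul]
    have : (Matrix.of fun i j : Fin p => Complex.exp (c i * d j)) *
        ((1 : Matrix (Fin p) (Fin p) ℂ).submatrix id a) =
        Matrix.of fun i j : Fin p => Complex.exp (c i * d (a j)) := by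
      ext i j
      simp [Matrix.mul_apply, Matrix.one_apply]
    rw [this, Matrix.det_apply']
    refine Finset.sum_congr rfl fun σ _ => ?_
    rw [Complex.exp_sum]
    rfl
  rw [div_mul_eq_mul_div, eq_div_iff hfac, mul_comm _ (Nat.factorial p : ℂ), h1]
  simp only [hK]
  simp only [Finset.mul_sum]
  rw [Finset.sum_comm, Finset.sum_mul]
  refine Finset.sum_congr rfl fun a _ => ?_
  rw [mul_assoc, mul_comm (Matrix.det (Matrix.submatrix _ _ _)), ← h2, Finset.mul_sum]
  refine Finset.sum_congr rfl fun σ _ => ?_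
  ring

lemma slope_lim (x y : ℂ) : Filter.Tendsto
    (fun s : ℂ => (Complex.exp (s * y) - Complex.exp (s * x)) / s) (nhdsWithin 0 {0}ᶜ)
    (nhds (y - x)) := by
  have h : HasDerivAt (fun s : ℂ => Complex.exp (s * y) - Complex.exp (s * x)) (y - x) 0 := by
    have h1 : ∀ y : ℂ, HasDerivAt (fun s : ℂ => Complex.exp (s * y)) y 0 := by
      intro y
      have := ((hasDerivAt_id (0 : ℂ)).mul_const y).cexp
      simpa using this
    exact (h1 y).sub (h1 x)
  have := h.tendsto_slope
  refine this.congr fun s => ?_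
  simp [slope_def_field]

lemma const_eq (hp : 1 ≤ p) (μ : Measure (Matrix.unitaryGroup (Fin p) ℂ))
    [IsProbabilityMeasure μ] (d : Fin p → ℂ) (κ : ℂ)
    (h : ∀ c : Fin p → ℂ, vandermonde p c * avg μ d (fun _ => 1) c =
      κ * (Matrix.of fun i j : Fin p => Complex.exp (c i * d j)).det) :
    ∏ j ∈ Finset.range p, (Nat.factorial j : ℂ) = κ * vandermonde p d := by
  rw [← vandermonde_nat hp]
  have hF : Continuous (avg μ d (fun _ => 1)) := (avg_contDiff μ d continuous_const).continuous
  have l1 : Filter.Tendsto (fun s : ℂ => vandermonde p (fun i => ((i : ℕ) : ℂ)) *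
      avg μ d (fun _ => 1) (fun i => s * (i : ℕ))) (nhdsWithin 0 {0}ᶜ)
      (nhds (vandermonde p (fun i => ((i : ℕ) : ℂ)))) := by
    have hc : Continuous (fun s : ℂ => vandermonde p (fun i => ((i : ℕ) : ℂ)) *
      avg μ d (fun _ => 1) (fun i : Fin p => s * (i : ℕ))) := by fun_prop
    have h0 := hc.tendsto 0
    simp only [zero_mul] at h0
    have e : avg μ d (fun _ => 1) (fun _ => 0) = 1 := avg_zero μ d
    rw [e, mul_one] at h0
    exact h0.mono_left nhdsWithin_le_nhds
  have l2 : Filter.Tendsto (fun s : ℂ => κ * ∏ q ∈ Finset.univ.filter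
      (fun q : Fin p × Fin p => q.1 < q.2),
      ((Complex.exp (s * d q.2) - Complex.exp (s * d q.1)) / s)) (nhdsWithin 0 {0}ᶜ)
      (nhds (κ * vandermonde p d)) :=
    (tendsto_finsetProd _ fun q _ => slope_lim (d q.1) (d q.2)).const_mul κ
  refine tendsto_nhds_unique l1 (l2.congr' ?_)
  filter_upwards [self_mem_nhdsWithin] with s hs
  have hs : s ≠ 0 := hs
  have hh := h (fun i => s * (i : ℕ))
  have hdet : (Matrix.of fun i j : Fin p => Complex.exp (s * (i : ℕ) * d j)).det =
      vandermonde p (fun i => Complex.exp (s * d i)) := by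
    rw [vandermonde_eq_det, ← Matrix.det_transpose]
    congr 1
    ext i j
    simp only [Matrix.transpose_apply, Matrix.of_apply, Matrix.vandermonde_apply]
    rw [← Complex.exp_nat_mul]; ring_nf
  have hv : vandermonde p (fun i => Complex.exp (s * d i)) = s ^ (p * (p - 1) / 2) *
      ∏ q ∈ Finset.univ.filter (fun q : Fin p × Fin p => q.1 < q.2),
      ((Complex.exp (s * d q.2) - Complex.exp (s * d q.1)) / s) := by
    have := vandermonde_smul (fun i => Complex.exp (s * d i) / s) s
    have e : (fun i => s * (Complex.exp (s * d i) / s)) = fun i => Complex.exp (s * d i) := by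
      funext i; field_simp
    rw [e] at this
    rw [this]
    simp only [vandermonde, sub_div]
  rw [hdet, hv, vandermonde_smul] at hh
  have hsn : s ^ (p * (p - 1) / 2) ≠ 0 := pow_ne_zero _ hs
  apply mul_left_cancel₀ hsn
  linear_combination -hh

lemma vandermonde_ne_zero (c : Fin p → ℂ) (hc : Function.Injective c) : vandermonde p c ≠ 0 := by
  unfold vandermonde
  refine Finset.prod_ne_zero_iff.2 fun q hq => ?_
  exact sub_ne_zero.2 (hc.ne (Finset.mem_filter.1 hq).2.ne')

end Final

/-- Harish-Chandra/Itzykson–Zuber: for `t ≠ 0`, a normal matrix `C` with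
distinct eigenvalues `c₁,…,c_p` (encoded by a unitary diagonalization `C = U₀ diag(c) U₀*`
with `c` injective) and `D = diag(d₁,…,d_p)` with distinct real `d_i`,
`∫_{U(p)} exp{t·Tr(C U* D U)} dμ(U)
  = (∏_{j=1}^{p−1} j!)·det[e^{t c_i d_j}] / (t^{p(p−1)/2}·Δ(c)·Δ(d))`,
where `μ` is the normalized Haar probability measure on `U(p)`. -/
theorem harish_chandra_itzykson_zuber (p : ℕ) (hp : 1 ≤ p) (t : ℂ) (ht : t ≠ 0)
    (C : Matrix (Fin p) (Fin p) ℂ) (c : Fin p → ℂ) (hc : Function.Injective c)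
    (hC : ∃ U₀ : Matrix.unitaryGroup (Fin p) ℂ,
      C = (U₀ : Matrix (Fin p) (Fin p) ℂ) * Matrix.diagonal c *
            star (U₀ : Matrix (Fin p) (Fin p) ℂ))
    (d : Fin p → ℝ) (hd : Function.Injective d)
    (μ : Measure (Matrix.unitaryGroup (Fin p) ℂ))
    [μ.IsHaarMeasure] [IsProbabilityMeasure μ] :
    (∫ U : Matrix.unitaryGroup (Fin p) ℂ,
        Complex.exp (t * Matrix.trace (C * star (U : Matrix (Fin p) (Fin p) ℂ) *
          Matrix.diagonal (fun i => (d i : ℂ)) * (U : Matrix (Fin p) (Fin p) ℂ))) ∂μ)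
      = ((∏ j ∈ Finset.range p, (Nat.factorial j : ℂ)) *
          (Matrix.of fun i j : Fin p => Complex.exp (t * c i * (d j : ℂ))).det) /
        (t^(p*(p-1)/2) * vandermonde p c * vandermonde p (fun i => (d i : ℂ))) := by
  obtain ⟨U₀, rfl⟩ := hC
  set dc : Fin p → ℂ := fun i => (d i : ℂ) with hdc
  have hdi : Function.Injective dc := fun i j h => hd (Complex.ofReal_injective h)
  obtain ⟨κ, hκ⟩ := exists_hciz_const hp μ dc hdi
  have hconst := const_eq hp μ dc κ hκ
  have hmain := hκ (fun i => t * c i)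
  have hexpo : ∀ U : Matrix.unitaryGroup (Fin p) ℂ,
      t * Matrix.trace ((U₀ : Matrix (Fin p) (Fin p) ℂ) * Matrix.diagonal c *
            star (U₀ : Matrix (Fin p) (Fin p) ℂ) * star (U : Matrix (Fin p) (Fin p) ℂ) *
          Matrix.diagonal dc * (U : Matrix (Fin p) (Fin p) ℂ)) =
        expo dc (fun i => t * c i) (U * U₀) := by
    intro U
    have e : (U₀ : Matrix (Fin p) (Fin p) ℂ) * Matrix.diagonal c *
            star (U₀ : Matrix (Fin p) (Fin p) ℂ) * star (U : Matrix (Fin p) (Fin p) ℂ) *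
          Matrix.diagonal dc * (U : Matrix (Fin p) (Fin p) ℂ) =
        U₀.1 * (Matrix.diagonal c * (star U₀.1 * Bm dc U)) := by
      simp only [Bm, mul_assoc]
    rw [e, Matrix.trace_mul_comm, expo_mul, Matrix.trace, Finset.mul_sum]
    refine Finset.sum_congr rfl fun i _ => ?_
    rw [Matrix.diag_apply, mul_assoc (Matrix.diagonal c), Matrix.diagonal_mul, mul_assoc]
    ring
  simp only [hexpo]
  rw [integral_right_mul μ U₀ (fun U => Complex.exp (expo dc (fun i => t * c i) U))]
  have hav : avg μ dc (fun _ => 1) (fun i => t * c i) =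
      ∫ U, Complex.exp (expo dc (fun i => t * c i) U) ∂μ := by
    simp only [avg, one_mul]
  rw [← hav, hconst]
  rw [vandermonde_smul] at hmain
  have h1 := vandermonde_ne_zero c hc
  have h2 := vandermonde_ne_zero dc hdi
  have h3 : t ^ (p * (p - 1) / 2) ≠ 0 := pow_ne_zero _ ht
  rw [eq_div_iff (mul_ne_zero (mul_ne_zero h3 h1) h2)]
  linear_combination vandermonde p dc * hmain
end
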